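/- For every real λ > 0 there exist a period p > 0 and a nonconstant C² curve γ = (x, y) : ℝ → ℝ² with γ(s + p) = γ(s) for all s, γ injective on [0, p), x(s) > 0 for all s, and (x'(s))² + (y'(s))² > 0 for all s, such that γ satisfies the geodesic equations of the conformal metric e^{2φ}(dx² + dy²) on the half-plane {x > 0} with φ(x,y) = λ·ln(x) − (x² + y²)/4; explicitly, writing φ_x = λ/x(s) − x(s)/2 and φ_y = −y(s)/2 along γ: x'' + φ_x·((x')² − (y')²) + 2φ_y·x'·y' = 0 and y'' + φ_y·((y')² − (x')²) + 2φ_x·x'·y' = 0 for all s. -/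

import Mathlib

open Real Set

/-! ### Global flows of bounded Lipschitz vector fields -/

theorem ang_global_flow {E : Type*} [NormedAddCommGroup E] [NormedSpace ℝ E] [CompleteSpace E]
    (f : E → E) (K : NNReal) (hK : LipschitzWith K f) (L : NNReal) (hL : ∀ p, ‖f p‖ ≤ L) (p : E) :
    ∃ γ : ℝ → E, γ 0 = p ∧ ∀ t, HasDerivAt γ (f (γ t)) t := by
  have local_ex : ∀ n : ℕ, ∃ γ : ℝ → E, γ 0 = p ∧
      ∀ t ∈ Ioo (-(n + 1 : ℝ)) (n + 1), HasDerivAt γ (f (γ t)) t := by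
    intro n
    have hn : (0 : ℝ) ≤ n := Nat.cast_nonneg n
    have h0 : (0 : ℝ) ∈ Icc (-(n + 1 : ℝ)) (n + 1) := by constructor <;> linarith
    have hPL : IsPicardLindelof (fun _ : ℝ => f) (⟨0, h0⟩ : Icc (-(n + 1 : ℝ)) (n + 1)) p
        (L * (n + 1)) 0 L K := by
      refine ⟨fun t _ => hK.lipschitzOnWith, fun x _ => continuousOn_const,
        fun t _ x _ => hL x, ?_⟩
      simp
    obtain ⟨α, hα0, hα⟩ := hPL.exists_eq_forall_mem_Icc_hasDerivWithinAt₀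
    refine ⟨α, hα0, fun t ht => ?_⟩
    exact (hα t (Ioo_subset_Icc_self ht)).hasDerivAt (Icc_mem_nhds ht.1 ht.2)
  choose g hg0 hg using local_ex
  have hcons : ∀ m n : ℕ, m ≤ n → EqOn (g m) (g n) (Ioo (-(m + 1 : ℝ)) (m + 1)) := by
    intro m n hmn
    have hm : (0 : ℝ) ≤ m := Nat.cast_nonneg m
    have hmn' : (m : ℝ) ≤ n := by exact_mod_cast hmn
    refine ODE_solution_unique_of_mem_Ioo (v := fun _ => f) (s := fun _ => univ) (K := K)
      (t₀ := 0) (fun t _ => hK.lipschitzOnWith) (by constructor <;> linarith)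
      (fun t ht => ⟨hg m t ht, mem_univ _⟩)
      (fun t ht => ⟨hg n t ⟨by linarith [ht.1], by linarith [ht.2]⟩, mem_univ _⟩) ?_
    rw [hg0, hg0]
  have hfl : ∀ t : ℝ, t ∈ Ioo (-((⌈|t|⌉₊ : ℝ) + 1)) ((⌈|t|⌉₊ : ℝ) + 1) := by
    intro t
    have h1 := Nat.le_ceil |t|
    have h2 := abs_le.1 h1
    constructor <;> linarith [h2.1, h2.2]
  have hG : ∀ (n : ℕ) (t : ℝ), t ∈ Ioo (-(n + 1 : ℝ)) (n + 1) → g ⌈|t|⌉₊ t = g n t := by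
    intro n t ht
    rcases le_total ⌈|t|⌉₊ n with h | h
    · exact hcons _ _ h (hfl t)
    · exact (hcons _ _ h ht).symm
  refine ⟨fun t => g ⌈|t|⌉₊ t, by simp [hg0], fun t => ?_⟩
  have h1 := hg ⌈|t|⌉₊ t (hfl t)
  refine h1.congr_of_eventuallyEq ?_
  filter_upwards [Ioo_mem_nhds (hfl t).1 (hfl t).2] with s hs
  exact hG _ _ hs

/-- bounded and Lipschitz real functions -/
def AngBL {E : Type*} [PseudoMetricSpace E] (f : E → ℝ) : Prop :=
  ∃ C : ℝ, 0 ≤ C ∧ (∀ p, |f p| ≤ C) ∧ ∀ p q, |f p - f q| ≤ C * dist p q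

theorem AngBL.mul {E : Type*} [PseudoMetricSpace E] {f g : E → ℝ} (hf : AngBL f) (hg : AngBL g) :
    AngBL (fun p => f p * g p) := by
  obtain ⟨C, hC, h1, h2⟩ := hf
  obtain ⟨D, hD, h3, h4⟩ := hg
  refine ⟨C * D + C * D, by positivity, fun p => ?_, fun p q => ?_⟩
  · rw [abs_mul]
    have := mul_le_mul (h1 p) (h3 p) (abs_nonneg _) hC
    nlinarith [mul_nonneg hC hD]
  · have : f p * g p - f q * g q = f p * (g p - g q) + (f p - f q) * g q := by ring
    rw [this]
    refine (abs_add_le _ _).trans ?_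
    rw [abs_mul, abs_mul]
    have a1 := mul_le_mul (h1 p) (h4 p q) (abs_nonneg _) hC
    have a2 := mul_le_mul (h2 p q) (h3 q) (abs_nonneg _) (mul_nonneg hC dist_nonneg)
    nlinarith

theorem AngBL.sub {E : Type*} [PseudoMetricSpace E] {f g : E → ℝ} (hf : AngBL f) (hg : AngBL g) :
    AngBL (fun p => f p - g p) := by
  obtain ⟨C, hC, h1, h2⟩ := hf
  obtain ⟨D, hD, h3, h4⟩ := hg
  refine ⟨C + D, by positivity, fun p => ?_, fun p q => ?_⟩
  · exact (abs_sub _ _).trans (add_le_add (h1 p) (h3 p))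
  · have : f p - g p - (f q - g q) = (f p - f q) - (g p - g q) := by ring
    rw [this]
    refine (abs_sub _ _).trans ?_
    nlinarith [h2 p q, h4 p q]

theorem AngBL.const {E : Type*} [PseudoMetricSpace E] (c : ℝ) : AngBL (fun _ : E => c) :=
  ⟨|c|, abs_nonneg _, fun _ => le_rfl, fun p q => by simp; positivity⟩

theorem AngBL.comp {E F : Type*} [PseudoMetricSpace E] [PseudoMetricSpace F] {f : F → ℝ}
    (hf : AngBL f) {g : E → F} (hg : LipschitzWith 1 g) : AngBL (fun p => f (g p)) := by
  obtain ⟨C, hC, h1, h2⟩ := hf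
  refine ⟨C, hC, fun p => h1 _, fun p q => (h2 _ _).trans ?_⟩
  have := hg.dist_le_mul p q
  simp only [NNReal.coe_one, one_mul] at this
  exact mul_le_mul_of_nonneg_left this hC

theorem AngBL.congr {E : Type*} [PseudoMetricSpace E] {f g : E → ℝ} (hf : AngBL f)
    (h : ∀ p, g p = f p) : AngBL g := by
  have : g = f := funext h
  rw [this]; exact hf

noncomputable def angA (x : ℝ) : ℝ := x / (1 + x ^ 2)
noncomputable def angB (y : ℝ) : ℝ := 1 / (1 + y ^ 2)
noncomputable def angD (lam x : ℝ) : ℝ := (x ^ 2 / 2 - lam) / (1 + x ^ 2)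
noncomputable def angH (y : ℝ) : ℝ := y / (2 * (1 + y ^ 2))

theorem angA_BL : AngBL angA := by
  refine ⟨1, zero_le_one, fun x => ?_, fun x z => ?_⟩
  · unfold angA
    rw [abs_div, abs_of_pos (by positivity : (0:ℝ) < 1 + x ^ 2), div_le_one (by positivity)]
    rw [abs_le]; constructor <;> nlinarith [sq_nonneg (x - 1), sq_nonneg (x + 1)]
  · unfold angA
    have : x / (1 + x ^ 2) - z / (1 + z ^ 2) =
        (x - z) * ((1 - x * z) / ((1 + x ^ 2) * (1 + z ^ 2))) := by
      field_simp; ring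
    rw [this, abs_mul, Real.dist_eq, one_mul]
    refine mul_le_of_le_one_right (abs_nonneg _) ?_
    rw [abs_div, abs_of_pos (by positivity : (0:ℝ) < (1 + x ^ 2) * (1 + z ^ 2)),
      div_le_one (by positivity), abs_le]
    constructor <;> nlinarith [sq_nonneg (x - z), sq_nonneg (x + z), sq_nonneg (x * z)]

theorem angB_BL : AngBL angB := by
  refine ⟨1, zero_le_one, fun x => ?_, fun x z => ?_⟩
  · unfold angB
    rw [abs_of_pos (by positivity), div_le_one (by positivity)]
    nlinarith
  · unfold angB
    have : 1 / (1 + x ^ 2) - 1 / (1 + z ^ 2) =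
        (x - z) * (-(x + z) / ((1 + x ^ 2) * (1 + z ^ 2))) := by
      field_simp; ring
    rw [this, abs_mul, Real.dist_eq, one_mul]
    refine mul_le_of_le_one_right (abs_nonneg _) ?_
    rw [abs_div, abs_of_pos (by positivity : (0:ℝ) < (1 + x ^ 2) * (1 + z ^ 2)),
      div_le_one (by positivity), abs_le]
    constructor <;> nlinarith [sq_nonneg (x - 1), sq_nonneg (x + 1), sq_nonneg (z - 1),
      sq_nonneg (z + 1), sq_nonneg (x * z)]

theorem angD_BL (lam : ℝ) : AngBL (angD lam) := by
  refine ((AngBL.const (1 / 2)).sub ((AngBL.const (lam + 1 / 2)).mul angB_BL)).congr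
    fun x => ?_
  unfold angD angB
  field_simp; ring

theorem angH_BL : AngBL angH := by
  refine ((AngBL.const (1 / 2)).mul angA_BL).congr fun x => ?_
  unfold angH angA
  field_simp

theorem ang_sin_BL : AngBL Real.sin :=
  ⟨1, zero_le_one, Real.abs_sin_le_one, fun p q => by
    have h := Real.lipschitzWith_sin.dist_le_mul p q
    simpa [Real.dist_eq] using h⟩

theorem ang_cos_BL : AngBL Real.cos :=
  ⟨1, zero_le_one, Real.abs_cos_le_one, fun p q => by
    have h := Real.lipschitzWith_cos.dist_le_mul p q
    simpa [Real.dist_eq] using h⟩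

noncomputable def angF1 (p : ℝ × ℝ × ℝ) : ℝ := angA p.1 * angB p.2.1 * Real.cos p.2.2
noncomputable def angF2 (p : ℝ × ℝ × ℝ) : ℝ := angA p.1 * angB p.2.1 * Real.sin p.2.2
noncomputable def angF3 (lam : ℝ) (p : ℝ × ℝ × ℝ) : ℝ :=
  angD lam p.1 * angB p.2.1 * Real.sin p.2.2 - angA p.1 * angH p.2.1 * Real.cos p.2.2

noncomputable def angField (lam : ℝ) (p : ℝ × ℝ × ℝ) : ℝ × ℝ × ℝ :=
  (angF1 p, angF2 p, angF3 lam p)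

theorem ang_l1 : LipschitzWith 1 (fun p : ℝ × ℝ × ℝ => p.1) := LipschitzWith.prod_fst
theorem ang_l2 : LipschitzWith 1 (fun p : ℝ × ℝ × ℝ => p.2.1) := by
  have := (LipschitzWith.prod_fst (α := ℝ) (β := ℝ)).comp
    (LipschitzWith.prod_snd (α := ℝ) (β := ℝ × ℝ))
  rw [one_mul] at this
  exact this
theorem ang_l3 : LipschitzWith 1 (fun p : ℝ × ℝ × ℝ => p.2.2) := by
  have := (LipschitzWith.prod_snd (α := ℝ) (β := ℝ)).comp
    (LipschitzWith.prod_snd (α := ℝ) (β := ℝ × ℝ))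
  rw [one_mul] at this
  exact this

theorem angField_bound (lam : ℝ) :
    ∃ K : NNReal, LipschitzWith K (angField lam) ∧ ∀ p, ‖angField lam p‖ ≤ K := by
  have h1 : AngBL angF1 :=
    ((angA_BL.comp ang_l1).mul (angB_BL.comp ang_l2)).mul (ang_cos_BL.comp ang_l3)
  have h2 : AngBL angF2 :=
    ((angA_BL.comp ang_l1).mul (angB_BL.comp ang_l2)).mul (ang_sin_BL.comp ang_l3)
  have h3 : AngBL (angF3 lam) :=
    ((((angD_BL lam).comp ang_l1).mul (angB_BL.comp ang_l2)).mul (ang_sin_BL.comp ang_l3)).sub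
    (((angA_BL.comp ang_l1).mul (angH_BL.comp ang_l2)).mul (ang_cos_BL.comp ang_l3))
  obtain ⟨C1, p1, b1, l1⟩ := h1
  obtain ⟨C2, p2, b2, l2⟩ := h2
  obtain ⟨C3, p3, b3, l3⟩ := h3
  have hCC : 0 ≤ C1 + C2 + C3 := by positivity
  refine ⟨(C1 + C2 + C3).toNNReal, LipschitzWith.of_dist_le_mul fun p q => ?_, fun p => ?_⟩
  · have e1 := l1 p q
    have e2 := l2 p q
    have e3 := l3 p q
    have hd : 0 ≤ dist p q := dist_nonneg
    have : dist (angField lam p) (angField lam q) =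
        max |angF1 p - angF1 q| (max |angF2 p - angF2 q| |angF3 lam p - angF3 lam q|) := rfl
    rw [this]
    rw [Real.coe_toNNReal _ hCC]
    refine max_le ?_ (max_le ?_ ?_) <;>
      nlinarith [mul_nonneg p1 hd, mul_nonneg p2 hd, mul_nonneg p3 hd]
  · have : ‖angField lam p‖ = max |angF1 p| (max |angF2 p| |angF3 lam p|) := rfl
    rw [this]
    rw [Real.coe_toNNReal _ hCC]
    refine max_le ?_ (max_le ?_ ?_) <;> linarith [b1 p, b2 p, b3 p]

/-- Solutions of the regularized flow. -/
structure AngSol (lam : ℝ) (x y θ : ℝ → ℝ) : Prop where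
  hx : ∀ t, HasDerivAt x (angF1 (x t, y t, θ t)) t
  hy : ∀ t, HasDerivAt y (angF2 (x t, y t, θ t)) t
  hθ : ∀ t, HasDerivAt θ (angF3 lam (x t, y t, θ t)) t

theorem AngSol.unique {lam : ℝ} {x y θ x' y' θ' : ℝ → ℝ} (h : AngSol lam x y θ)
    (h' : AngSol lam x' y' θ') (t₀ : ℝ) (h1 : x t₀ = x' t₀) (h2 : y t₀ = y' t₀)
    (h3 : θ t₀ = θ' t₀) : x = x' ∧ y = y' ∧ θ = θ' := by
  obtain ⟨K, hK, -⟩ := angField_bound lam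
  have key : (fun t => (x t, y t, θ t)) = fun t => (x' t, y' t, θ' t) := by
    refine ODE_solution_unique_univ (v := fun _ => angField lam) (s := fun _ => univ) (K := K)
      (t₀ := t₀) (fun t => hK.lipschitzOnWith) (fun t => ⟨?_, mem_univ _⟩)
      (fun t => ⟨?_, mem_univ _⟩) (by simp [h1, h2, h3])
    · exact (h.hx t).prodMk ((h.hy t).prodMk (h.hθ t))
    · exact (h'.hx t).prodMk ((h'.hy t).prodMk (h'.hθ t))
  refine ⟨funext fun t => ?_, funext fun t => ?_, funext fun t => ?_⟩
  · exact congrArg (fun p : ℝ × ℝ × ℝ => p.1) (congrFun key t)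
  · exact congrArg (fun p : ℝ × ℝ × ℝ => p.2.1) (congrFun key t)
  · exact congrArg (fun p : ℝ × ℝ × ℝ => p.2.2) (congrFun key t)

/-- A family of solutions depending continuously on the initial radius. -/
structure AngFamily (lam : ℝ) (X Y T : ℝ → ℝ → ℝ) : Prop where
  sol : ∀ R, AngSol lam (X R) (Y R) (T R)
  x0 : ∀ R, X R 0 = R
  y0 : ∀ R, Y R 0 = 0
  t0 : ∀ R, T R 0 = π / 2
  cont : ∀ R₀ τ ε : ℝ, 0 < ε → ∃ δ > 0, ∀ R, |R - R₀| < δ → ∀ t ∈ Icc 0 τ,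
    |X R t - X R₀ t| < ε ∧ |Y R t - Y R₀ t| < ε ∧ |T R t - T R₀ t| < ε

theorem ang_family_exists (lam : ℝ) : ∃ X Y T : ℝ → ℝ → ℝ, AngFamily lam X Y T := by
  obtain ⟨K, hK, hb⟩ := angField_bound lam
  have hex := fun R : ℝ => ang_global_flow (angField lam) K hK K hb (R, 0, π / 2)
  choose G hG0 hG using hex
  refine ⟨fun R t => (G R t).1, fun R t => (G R t).2.1, fun R t => (G R t).2.2,
    ⟨fun R => ⟨fun t => ?_, fun t => ?_, fun t => ?_⟩, fun R => by simp [hG0],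
      fun R => by simp [hG0], fun R => by simp [hG0], ?_⟩⟩
  · exact (hG R t).fst
  · exact (hG R t).snd.fst
  · exact (hG R t).snd.snd
  · intro R₀ τ ε hε
    refine ⟨ε * exp (-(K * |τ|)), by positivity, fun R hR t ht => ?_⟩
    have hc : ∀ R, Continuous (G R) := fun R =>
      continuous_iff_continuousAt.2 fun t => (hG R t).continuousAt
    have h0 : dist (G R 0) (G R₀ 0) ≤ |R - R₀| := by
      rw [hG0, hG0]
      simp [Prod.dist_eq, Real.dist_eq]
    have h1 := dist_le_of_trajectories_ODE (v := fun _ => angField lam) (K := K)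
      (fun _ => hK) (hc R).continuousOn (fun t _ => (hG R t).hasDerivWithinAt)
      (hc R₀).continuousOn (fun t _ => (hG R₀ t).hasDerivWithinAt) h0 t ht
    have h2 : |R - R₀| * exp (K * (t - 0)) < ε := by
      have h3 : exp (K * (t - 0)) ≤ exp (K * |τ|) := by
        apply Real.exp_le_exp.2
        refine mul_le_mul_of_nonneg_left ?_ K.2
        have := ht.2
        have := le_abs_self τ
        linarith
      calc |R - R₀| * exp (K * (t - 0)) ≤ |R - R₀| * exp (K * |τ|) :=
            mul_le_mul_of_nonneg_left h3 (abs_nonneg _)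
        _ < ε * exp (-(K * |τ|)) * exp (K * |τ|) :=
            mul_lt_mul_of_pos_right hR (exp_pos _)
        _ = ε := by rw [mul_assoc, ← Real.exp_add]; simp
    have h4 := lt_of_le_of_lt h1 h2
    have e : dist (G R t) (G R₀ t) = max |(G R t).1 - (G R₀ t).1|
      (max |(G R t).2.1 - (G R₀ t).2.1| |(G R t).2.2 - (G R₀ t).2.2|) := rfl
    rw [e, max_lt_iff, max_lt_iff] at h4
    exact ⟨h4.1, h4.2.1, h4.2.2⟩


/-! ### Trajectories and exact identities -/

noncomputable def angK (lam x y θ : ℝ) : ℝ := (x / 2 - lam / x) * Real.sin θ - y / 2 * Real.cos θ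
noncomputable def angE (lam x y : ℝ) : ℝ := Real.exp (lam * Real.log x - (x ^ 2 + y ^ 2) / 4)
noncomputable def angMu (x y : ℝ) : ℝ := angA x * angB y

theorem angE_pos (lam x y : ℝ) : 0 < angE lam x y := Real.exp_pos _

theorem angMu_pos {x : ℝ} (hx : 0 < x) (y : ℝ) : 0 < angMu x y := by
  unfold angMu angA angB; positivity

structure AngTr (lam : ℝ) (x y θ : ℝ → ℝ) : Prop where
  xpos : ∀ t, 0 < x t
  hx : ∀ t, HasDerivAt x (angMu (x t) (y t) * Real.cos (θ t)) t
  hy : ∀ t, HasDerivAt y (angMu (x t) (y t) * Real.sin (θ t)) t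
  hθ : ∀ t, HasDerivAt θ (angMu (x t) (y t) * angK lam (x t) (y t) (θ t)) t

theorem angA_abs (x : ℝ) : |angA x| ≤ |x| := by
  unfold angA
  rw [abs_div, abs_of_pos (by positivity : (0:ℝ) < 1 + x ^ 2)]
  exact div_le_self (abs_nonneg _) (by nlinarith)

theorem angB_pos (y : ℝ) : 0 < angB y := by unfold angB; positivity
theorem angB_le (y : ℝ) : angB y ≤ 1 := by
  unfold angB; rw [div_le_one (by positivity)]; nlinarith

theorem AngSol.pos {lam : ℝ} {x y θ : ℝ → ℝ} (h : AngSol lam x y θ) (h0 : 0 < x 0) :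
    ∀ t, 0 < x t := by
  have hc : Continuous x := continuous_iff_continuousAt.2 fun t => (h.hx t).continuousAt
  have key : ∀ t, |angF1 (x t, y t, θ t)| ≤ |x t| := by
    intro t
    simp only [angF1]
    rw [abs_mul, abs_mul]
    have h1 := angA_abs (x t)
    have h2 : |angB (y t)| ≤ 1 := by rw [abs_of_pos (angB_pos _)]; exact angB_le _
    have h3 := Real.abs_cos_le_one (θ t)
    have h4 : |angA (x t)| * |angB (y t)| ≤ |x t| * 1 :=
      mul_le_mul h1 h2 (abs_nonneg _) (abs_nonneg _)
    calc _ ≤ |x t| * 1 * 1 := mul_le_mul h4 h3 (abs_nonneg _) (by positivity)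
      _ = |x t| := by ring
  have key2 : ∀ t, |x t * angF1 (x t, y t, θ t)| ≤ x t ^ 2 := by
    intro t
    rw [abs_mul, ← sq_abs]
    nlinarith [key t, abs_nonneg (x t)]
  have d1 : ∀ t, HasDerivAt (fun s => x s ^ 2 * exp (2 * s))
      (2 * x t * angF1 (x t, y t, θ t) * exp (2 * t) + x t ^ 2 * (exp (2 * t) * 2)) t := by
    intro t
    have e1 := (h.hx t).pow 2
    have e2 : HasDerivAt (fun s : ℝ => exp (2 * s)) (exp (2 * t) * 2) t := by
      have := ((hasDerivAt_id t).const_mul 2).exp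
      simpa using this
    refine (e1.mul e2).congr_deriv ?_
    simp
  have d2 : ∀ t, HasDerivAt (fun s => x s ^ 2 * exp (-2 * s))
      (2 * x t * angF1 (x t, y t, θ t) * exp (-2 * t) + x t ^ 2 * (exp (-2 * t) * -2)) t := by
    intro t
    have e1 := (h.hx t).pow 2
    have e2 : HasDerivAt (fun s : ℝ => exp (-2 * s)) (exp (-2 * t) * -2) t := by
      have := ((hasDerivAt_id t).const_mul (-2)).exp
      simpa using this
    refine (e1.mul e2).congr_deriv ?_
    simp
  have m1 : Monotone (fun s => x s ^ 2 * exp (2 * s)) :=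
    monotone_of_hasDerivAt_nonneg (fun t => d1 t) fun t => by
      have := (abs_le.1 (key2 t)).1
      show 0 ≤ 2 * x t * angF1 (x t, y t, θ t) * exp (2 * t) + x t ^ 2 * (exp (2 * t) * 2)
      nlinarith [exp_pos (2 * t)]
  have m2 : Antitone (fun s => x s ^ 2 * exp (-2 * s)) :=
    antitone_of_hasDerivAt_nonpos (fun t => d2 t) fun t => by
      have := (abs_le.1 (key2 t)).2
      show 2 * x t * angF1 (x t, y t, θ t) * exp (-2 * t) + x t ^ 2 * (exp (-2 * t) * -2) ≤ 0
      nlinarith [exp_pos (-2 * t)]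
  have hne : ∀ t, x t ≠ 0 := by
    intro t ht
    rcases le_total 0 t with h1 | h1
    · have := m1 h1
      simp [ht] at this
      nlinarith
    · have := m2 h1
      simp [ht] at this
      nlinarith
  intro t
  by_contra hneg
  push Not at hneg
  obtain ⟨s, -, hs⟩ := intermediate_value_uIcc (a := 0) (b := t) hc.continuousOn
    (show (0:ℝ) ∈ uIcc (x 0) (x t) from by rw [mem_uIcc]; right; exact ⟨hneg, h0.le⟩)
  exact hne s hs

theorem AngSol.tr {lam : ℝ} {x y θ : ℝ → ℝ} (h : AngSol lam x y θ) (h0 : 0 < x 0) :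
    AngTr lam x y θ := by
  have hp := h.pos h0
  refine ⟨hp, h.hx, h.hy, fun t => ?_⟩
  refine (h.hθ t).congr_deriv ?_
  have := hp t
  simp only [angF3, angMu, angK, angD, angA, angB, angH]
  field_simp

namespace AngTr
variable {lam : ℝ} {x y θ : ℝ → ℝ}

theorem cx (h : AngTr lam x y θ) : Continuous x :=
  continuous_iff_continuousAt.2 fun t => (h.hx t).continuousAt
theorem cy (h : AngTr lam x y θ) : Continuous y :=
  continuous_iff_continuousAt.2 fun t => (h.hy t).continuousAt
theorem cθ (h : AngTr lam x y θ) : Continuous θ :=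
  continuous_iff_continuousAt.2 fun t => (h.hθ t).continuousAt

theorem mu_pos (h : AngTr lam x y θ) (t : ℝ) : 0 < angMu (x t) (y t) := angMu_pos (h.xpos t) _

theorem dS (h : AngTr lam x y θ) (t : ℝ) : HasDerivAt (fun s => Real.sin (θ s))
    (Real.cos (θ t) * (angMu (x t) (y t) * angK lam (x t) (y t) (θ t))) t := (h.hθ t).sin
theorem dC (h : AngTr lam x y θ) (t : ℝ) : HasDerivAt (fun s => Real.cos (θ s))
    (-Real.sin (θ t) * (angMu (x t) (y t) * angK lam (x t) (y t) (θ t))) t := (h.hθ t).cos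

theorem dE (h : AngTr lam x y θ) (t : ℝ) : HasDerivAt (fun s => angE lam (x s) (y s))
    (angE lam (x t) (y t) * (angMu (x t) (y t) *
      ((lam / x t - x t / 2) * Real.cos (θ t) - y t / 2 * Real.sin (θ t)))) t := by
  have hp := h.xpos t
  have e1 := (((h.hx t).log hp.ne').const_mul lam).sub
    ((((h.hx t).pow 2).add ((h.hy t).pow 2)).div_const 4)
  refine e1.exp.congr_deriv ?_
  show angE lam (x t) (y t) * _ = angE lam (x t) (y t) * _
  congr 1
  field_simp
  push_cast
  ring

/-- vertical momentum -/
theorem dES (h : AngTr lam x y θ) (t : ℝ) :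
    HasDerivAt (fun s => angE lam (x s) (y s) * Real.sin (θ s))
    (-(angMu (x t) (y t) * (y t / 2) * angE lam (x t) (y t))) t := by
  refine ((h.dE t).mul (h.dS t)).congr_deriv ?_
  have h1 := Real.sin_sq_add_cos_sq (θ t)
  simp only [angK]
  linear_combination (-(angE lam (x t) (y t) * angMu (x t) (y t) * (y t / 2))) * h1

/-- angular momentum -/
theorem dW (h : AngTr lam x y θ) (t : ℝ) :
    HasDerivAt (fun s => angE lam (x s) (y s) * (x s * Real.sin (θ s) - y s * Real.cos (θ s)))
    (-(lam * angMu (x t) (y t) * (y t / x t) * angE lam (x t) (y t))) t := by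
  refine ((h.dE t).mul (((h.hx t).mul (h.dS t)).sub ((h.hy t).mul (h.dC t)))).congr_deriv ?_
  have h1 := Real.sin_sq_add_cos_sq (θ t)
  simp only [angK, Pi.sub_apply, Pi.mul_apply]
  linear_combination (-(angE lam (x t) (y t) * angMu (x t) (y t) * lam * (y t / x t))) * h1

/-- dilation identity -/
theorem dQ (h : AngTr lam x y θ) (t : ℝ) :
    HasDerivAt (fun s => angE lam (x s) (y s) * (x s * Real.cos (θ s) + y s * Real.sin (θ s)))
    (angMu (x t) (y t) * angE lam (x t) (y t) * (lam + 1 - (x t ^ 2 + y t ^ 2) / 2)) t := by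
  refine ((h.dE t).mul (((h.hx t).mul (h.dC t)).add ((h.hy t).mul (h.dS t)))).congr_deriv ?_
  have h1 := Real.sin_sq_add_cos_sq (θ t)
  have h2 : x t * (x t)⁻¹ = 1 := mul_inv_cancel₀ (h.xpos t).ne'
  simp only [angK, Pi.add_apply, Pi.mul_apply]
  linear_combination (angE lam (x t) (y t) * angMu (x t) (y t) *
    ((lam / x t - x t / 2) * x t - y t ^ 2 / 2 + 1)) * h1 +
    angE lam (x t) (y t) * angMu (x t) (y t) * lam * h2

theorem dβ (h : AngTr lam x y θ) (t : ℝ) :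
    HasDerivAt (fun s => y s / x s)
    (angMu (x t) (y t) * (x t * Real.sin (θ t) - y t * Real.cos (θ t)) / x t ^ 2) t := by
  have hp := h.xpos t
  refine ((h.hy t).div (h.hx t) hp.ne').congr_deriv ?_
  ring

theorem dK (h : AngTr lam x y θ) (t : ℝ) :
    HasDerivAt (fun s => angK lam (x s) (y s) (θ s))
    (angMu (x t) (y t) * (angK lam (x t) (y t) (θ t) *
      ((x t * Real.cos (θ t) + y t * Real.sin (θ t)) / 2 - lam * Real.cos (θ t) / x t)
      + lam * Real.cos (θ t) * Real.sin (θ t) / x t ^ 2)) t := by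
  have hp := h.xpos t
  have e1 : HasDerivAt (fun s => lam / x s)
      (-(lam * (angMu (x t) (y t) * Real.cos (θ t)) / x t ^ 2)) t := by
    refine ((hasDerivAt_const t lam).div (h.hx t) hp.ne').congr_deriv ?_
    ring
  have e2 := ((((h.hx t).div_const 2).sub e1).mul (h.dS t)).sub
    (((h.hy t).div_const 2).mul (h.dC t))
  refine e2.congr_deriv ?_
  simp only [angK, Pi.sub_apply]
  ring

end AngTr


/-! ### Elementary tools -/

theorem ang_mono {f f' : ℝ → ℝ} (hf : ∀ t, HasDerivAt f (f' t) t) {a b : ℝ} (hab : a ≤ b)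
    (h : ∀ t ∈ Ioo a b, 0 ≤ f' t) : f a ≤ f b := by
  have hc : Continuous f := continuous_iff_continuousAt.2 fun t => (hf t).continuousAt
  have : MonotoneOn f (Icc a b) := by
    apply monotoneOn_of_deriv_nonneg (convex_Icc a b) hc.continuousOn
    · intro t _; exact (hf t).differentiableAt.differentiableWithinAt
    · intro t ht
      rw [interior_Icc] at ht
      rw [(hf t).deriv]; exact h t ht
  exact this (left_mem_Icc.2 hab) (right_mem_Icc.2 hab) hab

theorem ang_anti {f f' : ℝ → ℝ} (hf : ∀ t, HasDerivAt f (f' t) t) {a b : ℝ} (hab : a ≤ b)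
    (h : ∀ t ∈ Ioo a b, f' t ≤ 0) : f b ≤ f a := by
  have := ang_mono (f := fun t => - f t) (f' := fun t => - f' t) (fun t => (hf t).neg) hab
    (fun t ht => by have := h t ht; linarith)
  linarith

theorem ang_smono {f f' : ℝ → ℝ} (hf : ∀ t, HasDerivAt f (f' t) t) {a b : ℝ} (hab : a < b)
    (h : ∀ t ∈ Ioo a b, 0 < f' t) : f a < f b := by
  have hc : Continuous f := continuous_iff_continuousAt.2 fun t => (hf t).continuousAt
  have : StrictMonoOn f (Icc a b) := by
    apply strictMonoOn_of_deriv_pos (convex_Icc a b) hc.continuousOn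
    intro t ht
    rw [interior_Icc] at ht
    rw [(hf t).deriv]; exact h t ht
  exact this (left_mem_Icc.2 hab.le) (right_mem_Icc.2 hab.le) hab

theorem ang_santi {f f' : ℝ → ℝ} (hf : ∀ t, HasDerivAt f (f' t) t) {a b : ℝ} (hab : a < b)
    (h : ∀ t ∈ Ioo a b, f' t < 0) : f b < f a := by
  have := ang_smono (f := fun t => - f t) (f' := fun t => - f' t) (fun t => (hf t).neg) hab
    (fun t ht => by have := h t ht; linarith)
  linarith

theorem ang_first {P : ℝ → Prop} (hP : IsClosed {t | ¬ P t}) {a b : ℝ} (hab : a ≤ b)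
    (hb : ¬ P b) : ∃ t ∈ Icc a b, ¬ P t ∧ ∀ s ∈ Ico a t, P s := by
  have hcl : IsClosed ({t | ¬ P t} ∩ Icc a b) := hP.inter isClosed_Icc
  have hbd : BddBelow ({t | ¬ P t} ∩ Icc a b) := ⟨a, fun t ht => ht.2.1⟩
  have hm := hcl.csInf_mem ⟨b, hb, hab, le_rfl⟩ hbd
  refine ⟨_, hm.2, hm.1, fun s hs => ?_⟩
  by_contra hn
  have := csInf_le hbd (show s ∈ {t | ¬ P t} ∩ Icc a b from
    ⟨hn, hs.1, (hs.2.trans_le hm.2.2).le⟩)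
  exact absurd hs.2 (not_lt.2 this)

/-- linear growth contradicts boundedness -/
theorem ang_unbdd {f f' : ℝ → ℝ} (hf : ∀ t, HasDerivAt f (f' t) t) {a c M : ℝ} (hc : 0 < c)
    (h : ∀ t, a < t → c ≤ f' t) (hM : ∀ t, a ≤ t → f t ≤ M) : False := by
  obtain ⟨s, hs⟩ : ∃ s, s = (M - f a) / c + 1 := ⟨_, rfl⟩
  have h0 : 0 ≤ (M - f a) / c := div_nonneg (by linarith [hM a le_rfl]) hc.le
  have h1 := ang_mono (f := fun t => f t - c * t) (f' := fun t => f' t - c * 1)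
    (fun t => (hf t).sub ((hasDerivAt_id t).const_mul c)) (a := a) (b := a + s) (by linarith)
    (fun t ht => by have := h t ht.1; linarith)
  have h2 := hM (a + s) (by linarith)
  have h3 : c * s = (M - f a) + c := by rw [hs]; field_simp
  nlinarith

theorem ang_cos_neg {θ : ℝ} (h1 : π / 2 < θ) (h2 : θ < 3 * π / 2) : Real.cos θ < 0 :=
  Real.cos_neg_of_pi_div_two_lt_of_lt h1 (by linarith)

theorem ang_sin_neg {θ : ℝ} (h1 : π < θ) (h2 : θ < 2 * π) : Real.sin θ < 0 := by
  have := Real.sin_neg_of_neg_of_neg_pi_lt (x := θ - 2 * π) (by linarith) (by linarith)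
  rwa [Real.sin_sub_two_pi] at this

theorem ang_sin_nonneg_iff {θ : ℝ} (h1 : π / 2 ≤ θ) (h2 : θ ≤ 3 * π / 2) :
    0 ≤ Real.sin θ ↔ θ ≤ π := by
  have hp := Real.pi_pos
  constructor
  · intro h; by_contra hn; push Not at hn
    linarith [ang_sin_neg hn (by linarith)]
  · intro h; exact Real.sin_nonneg_of_nonneg_of_le_pi (by linarith) h

theorem ang_sin_pos_iff {θ : ℝ} (h1 : π / 2 ≤ θ) (h2 : θ ≤ 3 * π / 2) :
    0 < Real.sin θ ↔ θ < π := by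
  have hp := Real.pi_pos
  constructor
  · intro h; by_contra hn; push Not at hn
    rcases hn.eq_or_lt with h3 | h3
    · rw [← h3, Real.sin_pi] at h; exact lt_irrefl _ h
    · linarith [ang_sin_neg h3 (by linarith)]
  · intro h; exact Real.sin_pos_of_pos_of_lt_pi (by linarith) h

theorem ang_mu_lb {d x y X Y : ℝ} (hd : 0 < d) (h1 : d ≤ x) (h2 : x ≤ X) (h3 : 0 ≤ y)
    (h4 : y ≤ Y) : d / ((1 + X ^ 2) * (1 + Y ^ 2)) ≤ angMu x y := by
  have : angMu x y = x / ((1 + x ^ 2) * (1 + y ^ 2)) := by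
    unfold angMu angA angB; field_simp
  rw [this]
  have : 0 ≤ x := by linarith
  gcongr

namespace AngTr
variable {lam : ℝ} {x y θ : ℝ → ℝ}

theorem sin_step (h : AngTr lam x y θ) {s t : ℝ} (hst : s < t) (hy : ∀ u ∈ Ioo s t, 0 < y u) :
    angE lam (x t) (y t) * Real.sin (θ t) < angE lam (x s) (y s) * Real.sin (θ s) :=
  ang_santi h.dES hst fun u hu => by
    have := mul_pos (mul_pos (h.mu_pos u) (half_pos (hy u hu))) (angE_pos lam (x u) (y u))
    linarith

theorem sin_neg_step (h : AngTr lam x y θ) {s t : ℝ} (hst : s < t) (hy : ∀ u ∈ Ioo s t, 0 < y u)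
    (hs : Real.sin (θ s) ≤ 0) : Real.sin (θ t) < 0 := by
  have h1 := h.sin_step hst hy
  by_contra hn
  push Not at hn
  have h2 := mul_nonneg (angE_pos lam (x t) (y t)).le hn
  have h3 := mul_nonneg (angE_pos lam (x s) (y s)).le (by linarith : 0 ≤ - Real.sin (θ s))
  linarith

theorem sin_pos_step (h : AngTr lam x y θ) {s t : ℝ} (hst : s < t) (hy : ∀ u ∈ Ioo s t, 0 < y u)
    (ht : 0 ≤ Real.sin (θ t)) : 0 < Real.sin (θ s) := by
  by_contra hn
  push Not at hn
  linarith [h.sin_neg_step hst hy hn]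

theorem x_anti (h : AngTr lam x y θ) {s t : ℝ} (hst : s ≤ t)
    (hΩ : ∀ u ∈ Ioo s t, π / 2 < θ u ∧ θ u < 3 * π / 2) : x t ≤ x s :=
  ang_anti h.hx hst fun u hu =>
    (mul_neg_of_pos_of_neg (h.mu_pos u) (ang_cos_neg (hΩ u hu).1 (hΩ u hu).2)).le

theorem x_santi (h : AngTr lam x y θ) {s t : ℝ} (hst : s < t)
    (hΩ : ∀ u ∈ Ioo s t, π / 2 < θ u ∧ θ u < 3 * π / 2) : x t < x s :=
  ang_santi h.hx hst fun u hu =>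
    mul_neg_of_pos_of_neg (h.mu_pos u) (ang_cos_neg (hΩ u hu).1 (hΩ u hu).2)

theorem y_mono (h : AngTr lam x y θ) {s t : ℝ} (hst : s ≤ t)
    (hΩ : ∀ u ∈ Ioo s t, 0 ≤ Real.sin (θ u)) : y s ≤ y t :=
  ang_mono h.hy hst fun u hu => mul_nonneg (h.mu_pos u).le (hΩ u hu)

theorem y_anti (h : AngTr lam x y θ) {s t : ℝ} (hst : s ≤ t)
    (hΩ : ∀ u ∈ Ioo s t, Real.sin (θ u) ≤ 0) : y t ≤ y s :=
  ang_anti h.hy hst fun u hu => mul_nonpos_of_nonneg_of_nonpos (h.mu_pos u).le (hΩ u hu)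

/-- never-exiting trajectories keep `sin θ > 0` -/
theorem ne_sin (h : AngTr lam x y θ) (hl : 0 < lam)
    (hΩ : ∀ t, 0 < t → 0 < y t ∧ π / 2 < θ t ∧ θ t < 3 * π / 2) :
    ∀ t, 0 < t → 0 < Real.sin (θ t) := by
  intro t0 ht0
  by_contra hn
  push Not at hn
  have hs1 : Real.sin (θ (t0 + 1)) < 0 :=
    h.sin_neg_step (by linarith) (fun u hu => (hΩ u (by linarith [hu.1])).1) hn
  obtain ⟨t1, ht1⟩ : ∃ t1, t1 = t0 + 1 := ⟨_, rfl⟩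
  rw [← ht1] at hs1
  have ht1p : 0 < t1 := by linarith
  have hneg : ∀ t, t1 ≤ t → Real.sin (θ t) < 0 := by
    intro t ht
    rcases ht.eq_or_lt with h1 | h1
    · rwa [← h1]
    · exact h.sin_neg_step h1 (fun u hu => (hΩ u (by linarith [hu.1])).1) hs1.le
  obtain ⟨P, hP⟩ : ∃ P, P = -(angE lam (x t1) (y t1) * Real.sin (θ t1)) := ⟨_, rfl⟩
  have hPpos : 0 < P := by
    rw [hP]; have := mul_neg_of_pos_of_neg (angE_pos lam (x t1) (y t1)) hs1; linarith
  have hEl : ∀ t, t1 ≤ t → P ≤ angE lam (x t) (y t) := by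
    intro t ht
    have h1 : angE lam (x t) (y t) * Real.sin (θ t) ≤ -P := by
      rcases ht.eq_or_lt with h1 | h1
      · rw [← h1, hP]; linarith
      · have := h.sin_step h1 (fun u hu => (hΩ u (by linarith [hu.1])).1)
        rw [hP]; linarith
    nlinarith [angE_pos lam (x t) (y t), Real.neg_one_le_sin (θ t)]
  have hxl : ∀ t, t1 ≤ t → exp (log P / lam) ≤ x t := by
    intro t ht
    have hp := h.xpos t
    have h1 : P ≤ exp (lam * log (x t)) := (hEl t ht).trans (by
      unfold angE; apply exp_le_exp.2; nlinarith [sq_nonneg (x t), sq_nonneg (y t)])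
    have h2 : log P ≤ lam * log (x t) := (log_le_iff_le_exp hPpos).2 h1
    have h3 : log P / lam ≤ log (x t) := by rw [div_le_iff₀ hl]; linarith
    calc _ ≤ exp (log (x t)) := exp_le_exp.2 h3
      _ = x t := exp_log hp
  have hd : 0 < exp (log P / lam) := exp_pos _
  refine ang_unbdd (f := fun t => -(x t + y t)) (a := t1) (M := 0)
    (fun t => ((h.hx t).add (h.hy t)).neg)
    (c := exp (log P / lam) / ((1 + (x t1) ^ 2) * (1 + (y t1) ^ 2))) (by positivity) ?_ ?_
  · intro t ht
    have h1 := ang_mu_lb hd (hxl t ht.le) (h.x_anti ht.le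
      (fun u hu => (hΩ u (by linarith [hu.1])).2)) (hΩ t (by linarith)).1.le
      (h.y_anti ht.le (fun u hu => (hneg u hu.1.le).le))
    have h2 := hneg t ht.le
    have h3 := ang_cos_neg (hΩ t (by linarith)).2.1 (hΩ t (by linarith)).2.2
    have h4 := Real.sin_sq_add_cos_sq (θ t)
    have h5 : Real.sin (θ t) + Real.cos (θ t) ≤ -1 := by nlinarith
    nlinarith [h.mu_pos t]
  · intro t ht
    have := h.xpos t
    have := (hΩ t (by linarith)).1
    linarith

end AngTr


namespace AngTr
variable {lam : ℝ} {x y θ : ℝ → ℝ}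

/-- never-exiting trajectories approach the axis -/
theorem ne_x (h : AngTr lam x y θ) (hl : 0 < lam)
    (hΩ : ∀ t, 0 < t → 0 < y t ∧ π / 2 < θ t ∧ θ t < 3 * π / 2) (δ : ℝ) (hδ : 0 < δ) :
    ∃ t, 0 < t ∧ x t < δ := by
  by_contra hcon
  push Not at hcon
  have hS := h.ne_sin hl hΩ
  have hpi := Real.pi_pos
  have hcos : ∀ t, 0 < t → Real.cos (θ t) < 0 := fun t ht => ang_cos_neg (hΩ t ht).2.1 (hΩ t ht).2.2
  have hyu : ∀ M, ∃ t, 1 ≤ t ∧ M < y t := by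
    intro M
    by_contra hM
    push Not at hM
    refine ang_unbdd (f := fun t => y t - x t) (a := 1) (M := M)
      (fun t => (h.hy t).sub (h.hx t)) (c := δ / ((1 + (x 1) ^ 2) * (1 + M ^ 2))) (by positivity)
      ?_ ?_
    · intro t ht
      have h1 := ang_mu_lb hδ (hcon t (by linarith)) (h.x_anti ht.le
        (fun u hu => (hΩ u (by linarith [hu.1])).2)) (hΩ t (by linarith)).1.le (hM t ht.le)
      have h2 := hS t (by linarith)
      have h3 := hcos t (by linarith)
      have h4 := Real.sin_sq_add_cos_sq (θ t)
      have h5 : 1 ≤ Real.sin (θ t) - Real.cos (θ t) := by nlinarith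
      nlinarith [h.mu_pos t]
    · intro t ht
      have := h.xpos t
      linarith [hM t ht]
  have hym : ∀ s t, 0 < s → s ≤ t → y s ≤ y t := fun s t hs hst =>
    h.y_mono hst (fun u hu => (hS u (by linarith [hu.1])).le)
  have hxa : ∀ s t, 0 < s → s ≤ t → x t ≤ x s := fun s t hs hst =>
    h.x_anti hst (fun u hu => (hΩ u (by linarith [hu.1])).2)
  by_cases hK : ∀ t, 1 ≤ t → 0 < angK lam (x t) (y t) (θ t)
  · -- curvature positive
    have hθm : ∀ t, 1 ≤ t → θ 1 ≤ θ t := fun t ht =>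
      ang_mono h.hθ ht fun u hu => (mul_pos (h.mu_pos u) (hK u hu.1.le)).le
    have hle : ∀ t, 0 < t → θ t ≤ π := fun t ht =>
      (ang_sin_nonneg_iff (hΩ t ht).2.1.le (hΩ t ht).2.2.le).1 (hS t ht).le
    have hcc : ∀ t, 1 ≤ t → Real.cos (θ t) ≤ Real.cos (θ 1) := fun t ht =>
      Real.cos_le_cos_of_nonneg_of_le_pi (by linarith [(hΩ 1 one_pos).2.1])
        (hle t (by linarith)) (hθm t ht)
    have hc1 := hcos 1 one_pos
    obtain ⟨t, ht, hty⟩ := hyu ((x 1 - Real.cos (θ 1) * y 1) / (-Real.cos (θ 1)))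
    have h1 := ang_anti (f := fun t => x t + (-Real.cos (θ 1)) * y t)
      (fun t => (h.hx t).add ((h.hy t).const_mul (-Real.cos (θ 1)))) ht (fun u hu => by
        have h2 := hcc u hu.1.le
        have h3 := Real.sin_le_one (θ u)
        have h4 := h.mu_pos u
        have h5 : Real.cos (θ u) + -Real.cos (θ 1) * Real.sin (θ u) ≤ 0 := by nlinarith
        nlinarith)
    rw [div_lt_iff₀ (by linarith)] at hty
    have := h.xpos t
    linarith
  · push Not at hK
    obtain ⟨t1, ht1, hk1⟩ := hK
    have hKle : ∀ t, t1 ≤ t → angK lam (x t) (y t) (θ t) ≤ 0 := by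
      intro t ht
      have hc : Continuous (fun s => angK lam (x s) (y s) (θ s)) :=
        continuous_iff_continuousAt.2 fun s => (h.dK s).continuousAt
      refine image_le_of_deriv_right_lt_deriv_boundary (a := t1) (b := t) hc.continuousOn
        (fun s _ => (h.dK s).hasDerivWithinAt) (B := fun _ => 0) (B' := fun _ => 0) hk1
        (fun s => hasDerivAt_const s 0) ?_ ⟨ht, le_rfl⟩
      intro s hs hs0
      have hsp : 0 < s := by linarith [hs.1]
      have h1 := mul_neg_of_pos_of_neg hl (hcos s hsp)
      have h2 := mul_neg_of_neg_of_pos h1 (hS s hsp)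
      have h3 : 0 < x s ^ 2 := pow_pos (h.xpos s) 2
      rw [hs0, zero_mul, zero_add]
      exact mul_neg_of_pos_of_neg (h.mu_pos s) (div_neg_of_neg_of_pos h2 h3)
    obtain ⟨t2, ht2, hy2⟩ := hyu (1 + 2 * lam * x 1 / δ)
    obtain ⟨t3, ht31, ht32⟩ : ∃ t3, t1 ≤ t3 ∧ t2 ≤ t3 := ⟨max t1 t2, le_max_left _ _, le_max_right _ _⟩
    have hdK : ∀ t, t3 ≤ t → angMu (x t) (y t) * (angK lam (x t) (y t) (θ t) *
      ((x t * Real.cos (θ t) + y t * Real.sin (θ t)) / 2 - lam * Real.cos (θ t) / x t)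
      + lam * Real.cos (θ t) * Real.sin (θ t) / x t ^ 2) < 0 := by
      intro t ht
      have htp : 0 < t := by linarith
      have hC := hcos t htp
      have hSt := hS t htp
      have hx := h.xpos t
      have hyt : 1 + 2 * lam * x 1 / δ ≤ y t := hy2.le.trans (hym t2 t (by linarith) (by linarith))
      have hx1 : x t ≤ x 1 := hxa 1 t one_pos (by linarith)
      have hxd := hcon t htp
      have hx1p := h.xpos 1
      have hq0 : 0 ≤ 2 * lam * x 1 / δ := by positivity
      have hk := hKle t (by linarith)
      have hq : 0 ≤ x t * Real.cos (θ t) + y t * Real.sin (θ t) := by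
        unfold angK at hk
        have e1 : lam / x t ≤ lam / δ := by gcongr
        have e2 : -(Real.cos (θ t)) * y t ≤ 2 * (lam / δ) * Real.sin (θ t) := by
          nlinarith
        have e3 : 2 * lam * x 1 / δ = 2 * (lam / δ) * x 1 := by ring
        have e4 : 2 * (lam / δ) * x t ≤ y t ^ 2 := by
          have : 0 ≤ lam / δ := by positivity
          nlinarith
        have e5 : 0 ≤ y t * (x t * Real.cos (θ t) + y t * Real.sin (θ t)) := by
          nlinarith
        exact nonneg_of_mul_nonneg_right e5 (by linarith)
      have h1 := mul_neg_of_pos_of_neg hl hC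
      have h2 := mul_neg_of_neg_of_pos h1 hSt
      have h3 : lam * Real.cos (θ t) * Real.sin (θ t) / x t ^ 2 < 0 :=
        div_neg_of_neg_of_pos h2 (by positivity)
      have h4 : lam * Real.cos (θ t) / x t < 0 := div_neg_of_neg_of_pos h1 hx
      apply mul_neg_of_pos_of_neg (h.mu_pos t)
      nlinarith
    obtain ⟨k4, hk4⟩ : ∃ k, k = angK lam (x (t3+1)) (y (t3+1)) (θ (t3+1)) := ⟨_, rfl⟩
    have hk4n : k4 < 0 := by
      have := ang_santi h.dK (show t3 < t3 + 1 by linarith) (fun u hu => hdK u hu.1.le)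
      have h5 := hKle t3 ht31
      rw [hk4]; linarith
    have hk4le : ∀ t, t3 + 1 ≤ t → angK lam (x t) (y t) (θ t) ≤ k4 := by
      intro t ht
      rw [hk4]
      exact ang_anti h.dK ht (fun u hu => (hdK u (by linarith [hu.1])).le)
    obtain ⟨t, ht, hty⟩ := hyu ((2 + -k4 * y (t3+1)) / (-k4) + y (t3 + 1))
    have ht4 : t3 + 1 ≤ t := by
      by_contra hlt
      push Not at hlt
      have := hym t (t3+1) (by linarith) hlt.le
      have h6 : 0 ≤ (2 + -k4 * y (t3+1)) / (-k4) :=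
        div_nonneg (by nlinarith [(hΩ (t3+1) (by linarith)).1]) (by linarith)
      linarith
    have h1 := ang_anti (f := fun t => -Real.cos (θ t) + (-k4) * y t)
      (fun t => (h.dC t).neg.add ((h.hy t).const_mul (-k4))) ht4 (fun u hu => by
        have h2 := hk4le u hu.1.le
        have h3 := hS u (by linarith [hu.1])
        have h4 := mul_pos (h.mu_pos u) h3
        nlinarith)
    have h7 : (2 + -k4 * y (t3+1)) / (-k4) < y t := by
      have := (hΩ (t3+1) (by linarith)).1; linarith
    rw [div_lt_iff₀ (by linarith)] at h7
    have h8 := Real.neg_one_le_cos (θ (t3+1))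
    have h9 := Real.cos_le_one (θ t)
    nlinarith

/-- near the axis the curve cannot come back down -/
theorem near_axis (h : AngTr lam x y θ) (hl : 0 < lam) {t T : ℝ} (htT : t ≤ T)
    (hΩ : ∀ s ∈ Icc t T, π / 2 < θ s ∧ θ s < 3 * π / 2) (hy : 0 < y t)
    (hs : 0 ≤ Real.sin (θ t)) (hx1 : x t ^ 2 ≤ lam) (hx2 : π * x t < lam * y t) : 0 ≤ y T := by
  by_contra hneg
  push Not at hneg
  obtain ⟨T', hT', hnot, hbef⟩ := ang_first (P := fun s => 0 < y s) (a := t) (b := T)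
    (by simpa only [not_lt] using isClosed_le h.cy continuous_const) htT (by linarith)
  have hyT : y T' ≤ 0 := not_lt.1 hnot
  have hsub : ∀ s, t ≤ s → s ≤ T' → π / 2 < θ s ∧ θ s < 3 * π / 2 := fun s h1 h2 =>
    hΩ s ⟨h1, h2.trans hT'.2⟩
  have hex : ∃ s ∈ Icc t T', Real.sin (θ s) < 0 := by
    by_contra hc
    push Not at hc
    have := h.y_mono hT'.1 (fun u hu => hc u ⟨hu.1.le, hu.2.le⟩)
    linarith
  obtain ⟨s, hs1, hs2⟩ := hex
  have hθt : θ t ≤ π := (ang_sin_nonneg_iff (hsub t le_rfl hT'.1).1.le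
    (hsub t le_rfl hT'.1).2.le).1 hs
  have hθs : π ≤ θ s := by
    by_contra hc
    push Not at hc
    have := (ang_sin_nonneg_iff (hsub s hs1.1 hs1.2).1.le (hsub s hs1.1 hs1.2).2.le).2 hc.le
    linarith
  obtain ⟨t2, ht2, hθ2⟩ := intermediate_value_Icc hs1.1 h.cθ.continuousOn ⟨hθt, hθs⟩
  have hsin2 : Real.sin (θ t2) = 0 := by rw [hθ2, Real.sin_pi]
  have ht2T : t2 ≤ T' := ht2.2.trans hs1.2
  have hy2 : y t ≤ y t2 := h.y_mono ht2.1 fun u hu =>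
    (h.sin_pos_step hu.2 (fun v hv => hbef v ⟨by linarith [hv.1, hu.1], by linarith [hv.2]⟩)
      hsin2.ge).le
  have hxt := h.xpos t
  have hmono := ang_mono (f := fun u => y u + 2 * x t / lam * θ u)
    (fun u => (h.hy u).add ((h.hθ u).const_mul (2 * x t / lam))) ht2T (fun u hu => by
      have hut : t ≤ u := ht2.1.trans hu.1.le
      have hyu := hbef u ⟨hut, hu.2⟩
      have hsu : Real.sin (θ u) < 0 := h.sin_neg_step hu.1
        (fun v hv => hbef v ⟨by linarith [hv.1, ht2.1], by linarith [hv.2, hu.2]⟩) hsin2.le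
      have hcu := ang_cos_neg (hsub u hut hu.2.le).1 (hsub u hut hu.2.le).2
      have hxu : x u ≤ x t := h.x_anti hut fun v hv =>
        hsub v hv.1.le (by linarith [hv.2, hu.2])
      have hxp := h.xpos u
      have hk : -Real.sin (θ u) * (lam / (2 * x t)) ≤ angK lam (x u) (y u) (θ u) := by
        unfold angK
        have e1 : x u / 2 - lam / x u ≤ -(lam / (2 * x t)) := by
          have e2 : lam / x t ≤ lam / x u := by gcongr
          have e3 : lam / (2 * x t) = lam / x t / 2 := by field_simp
          have e4 : x u ≤ lam / x t := by
            rw [le_div_iff₀ hxt]; nlinarith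
          linarith
        nlinarith
      have hk2 : -Real.sin (θ u) ≤ 2 * x t / lam * angK lam (x u) (y u) (θ u) := by
        have : -Real.sin (θ u) = 2 * x t / lam * (-Real.sin (θ u) * (lam / (2 * x t))) := by
          field_simp
        rw [this]
        exact mul_le_mul_of_nonneg_left hk (by positivity)
      nlinarith [h.mu_pos u])
  rw [hθ2] at hmono
  have hθT := (hsub T' hT'.1 le_rfl).2
  have hc : 0 < 2 * x t / lam := by positivity
  have h9 : 2 * x t / lam * (θ T' - π) < y t := by
    have : 2 * x t / lam * (θ T' - π) ≤ 2 * x t / lam * (π / 2) :=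
      mul_le_mul_of_nonneg_left (by linarith) hc.le
    have e : 2 * x t / lam * (π / 2) = π * x t / lam := by ring
    have e2 : π * x t / lam < y t := by rw [div_lt_iff₀ hl]; linarith
    linarith
  linarith

/-- the sphere is invariant -/
theorem sphere (h : AngTr lam x y θ) (hx : x 0 ^ 2 = 2 * (lam + 1)) (hy : y 0 = 0)
    (hθ : θ 0 = π / 2) (τ : ℝ) (hτ : 0 ≤ τ) :
    x τ * Real.cos (θ τ) + y τ * Real.sin (θ τ) = 0 := by
  have hEc : Continuous fun s => angE lam (x s) (y s) :=
    continuous_iff_continuousAt.2 fun s => (h.dE s).continuousAt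
  have hμc : Continuous fun s => angMu (x s) (y s) := by
    unfold angMu angA angB
    have := h.cx; have := h.cy
    exact (h.cx.div (by fun_prop) (fun s => by positivity)).mul
      (continuous_const.div (by fun_prop) (fun s => by positivity))
  have hc : Continuous fun s => angMu (x s) (y s) * (2 / angE lam (x s) (y s)
      + angE lam (x s) (y s) / 2) :=
    hμc.mul ((continuous_const.div hEc (fun s => (angE_pos _ _ _).ne')).add (hEc.div_const 2))
  obtain ⟨K, hK⟩ := (isCompact_Icc (a := 0) (b := τ)).bddAbove_image hc.continuousOn
  have hK' : ∀ s ∈ Icc 0 τ, angMu (x s) (y s) * (2 / angE lam (x s) (y s)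
      + angE lam (x s) (y s) / 2) ≤ K := fun s hs => hK ⟨s, hs, rfl⟩
  have dz : ∀ t, HasDerivAt (fun s => x s ^ 2 + y s ^ 2 - 2 * (lam + 1))
      (2 * angMu (x t) (y t) * (x t * Real.cos (θ t) + y t * Real.sin (θ t))) t := fun t => by
    refine ((((h.hx t).pow 2).add ((h.hy t).pow 2)).sub_const _).congr_deriv ?_
    push_cast; ring
  have dN : ∀ t, HasDerivAt (fun s => ((x s ^ 2 + y s ^ 2 - 2 * (lam + 1)) ^ 2 +
      (angE lam (x s) (y s) * (x s * Real.cos (θ s) + y s * Real.sin (θ s))) ^ 2)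
        * exp (-K * s)) _ t := fun t => (((dz t).pow 2).add ((h.dQ t).pow 2)).mul
          (((hasDerivAt_id t).const_mul (-K)).exp)
  have hfin := ang_anti dN hτ (fun t ht => by
    have hE := angE_pos lam (x t) (y t)
    have hm := h.mu_pos t
    have hk := hK' t ⟨ht.1.le, ht.2.le⟩
    have hex := exp_pos (-K * t)
    simp only [Pi.add_apply, Pi.pow_apply, id]
    obtain ⟨E, hE'⟩ : ∃ E, E = angE lam (x t) (y t) := ⟨_, rfl⟩
    obtain ⟨m, hm'⟩ : ∃ m, m = angMu (x t) (y t) := ⟨_, rfl⟩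
    obtain ⟨q, hq'⟩ : ∃ q, q = x t * Real.cos (θ t) + y t * Real.sin (θ t) := ⟨_, rfl⟩
    obtain ⟨z, hz'⟩ : ∃ z, z = x t ^ 2 + y t ^ 2 - 2 * (lam + 1) := ⟨_, rfl⟩
    have hz2 : lam + 1 - (x t ^ 2 + y t ^ 2) / 2 = -z / 2 := by rw [hz']; ring
    rw [hz2, ← hE', ← hm', ← hq', ← hz']
    rw [← hE', ← hm'] at hk
    rw [← hE'] at hE
    rw [← hm'] at hm
    have main : 2 * z * (2 * m * q) + 2 * (E * q) * (m * E * (-z / 2)) ≤ K * (z ^ 2 + (E * q) ^ 2) := by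
      have a1 : 2 * z * (2 * m * q) ≤ m * (2 / E) * (z ^ 2 + (E * q) ^ 2) := by
        have : m * (2 / E) * (z ^ 2 + (E * q) ^ 2) - 2 * z * (2 * m * q)
          = m * (2 / E) * (z - E * q) ^ 2 := by field_simp; ring
        have : 0 ≤ m * (2 / E) * (z - E * q) ^ 2 := by positivity
        linarith
      have a2 : 2 * (E * q) * (m * E * (-z / 2)) ≤ m * (E / 2) * (z ^ 2 + (E * q) ^ 2) := by
        have : m * (E / 2) * (z ^ 2 + (E * q) ^ 2) - 2 * (E * q) * (m * E * (-z / 2))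
          = m * (E / 2) * (z + E * q) ^ 2 := by ring
        have : 0 ≤ m * (E / 2) * (z + E * q) ^ 2 := by positivity
        linarith
      have a3 : 0 ≤ z ^ 2 + (E * q) ^ 2 := by positivity
      nlinarith
    push_cast
    nlinarith)
  simp only [hx, hy, hθ, Real.cos_pi_div_two] at hfin
  have h0 : exp (-K * τ) > 0 := exp_pos _
  have h1 : (angE lam (x τ) (y τ) * (x τ * Real.cos (θ τ) + y τ * Real.sin (θ τ))) ^ 2 ≤ 0 := by
    have e : (2 * (lam + 1) + 0 ^ 2 - 2 * (lam + 1)) ^ 2 +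
        (angE lam (x 0) 0 * (x 0 * 0 + 0 * Real.sin (π / 2))) ^ 2 = 0 := by ring
    rw [e, zero_mul] at hfin
    have := nonpos_of_mul_nonpos_left hfin h0
    nlinarith [sq_nonneg (x τ ^ 2 + y τ ^ 2 - 2 * (lam + 1))]
  have h2 := pow_eq_zero_iff (two_ne_zero) |>.1 (le_antisymm h1 (sq_nonneg _))
  rcases mul_eq_zero.1 h2 with h3 | h3
  · exact absurd h3 (angE_pos _ _ _).ne'
  · exact h3

end AngTr


def AngOm (y θ : ℝ → ℝ) (t : ℝ) : Prop := 0 < y t ∧ π / 2 < θ t ∧ θ t < 3 * π / 2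

theorem ang_margin {f : ℝ → ℝ} (hf : Continuous f) {a b : ℝ} (h : ∀ t ∈ Icc a b, 0 < f t) :
    ∃ m > 0, ∀ t ∈ Icc a b, m ≤ f t := by
  rcases (Icc a b).eq_empty_or_nonempty with he | hne
  · exact ⟨1, one_pos, fun t ht => by rw [he] at ht; exact absurd ht (notMem_empty t)⟩
  · obtain ⟨s, hs, hmin⟩ := isCompact_Icc.exists_isMinOn hne hf.continuousOn
    exact ⟨f s, h s hs, fun t ht => hmin ht⟩

namespace AngTr
variable {lam : ℝ} {x y θ : ℝ → ℝ}

theorem om_closed (h : AngTr lam x y θ) : IsClosed {t | ¬ AngOm y θ t} := by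
  have : IsOpen {t | AngOm y θ t} :=
    (isOpen_lt continuous_const h.cy).inter
      ((isOpen_lt continuous_const h.cθ).inter (isOpen_lt h.cθ continuous_const))
  exact this.isClosed_compl

theorem exit_dich (h : AngTr lam x y θ) {ε : ℝ} (hε : 0 < ε) (hs : ∀ t ∈ Ioc 0 ε, AngOm y θ t) :
    (∀ t, 0 < t → AngOm y θ t) ∨ ∃ t₁ > 0, (∀ t ∈ Ioo 0 t₁, AngOm y θ t) ∧ ¬ AngOm y θ t₁ ∧
      0 ≤ y t₁ ∧ π / 2 ≤ θ t₁ ∧ θ t₁ ≤ 3 * π / 2 := by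
  by_cases hall : ∀ t, 0 < t → AngOm y θ t
  · exact Or.inl hall
  right
  push Not at hall
  obtain ⟨b, hb0, hb⟩ := hall
  have hεb : ε ≤ b := by
    by_contra hlt
    push Not at hlt
    exact hb (hs b ⟨hb0, hlt.le⟩)
  obtain ⟨t, ht, hnt, hbef⟩ := ang_first h.om_closed hεb hb
  have htp : 0 < t := hε.trans_le ht.1
  have hΩ : ∀ s ∈ Ioo 0 t, AngOm y θ s := by
    intro s hs'
    rcases le_or_gt s ε with h1 | h1
    · exact hs s ⟨hs'.1, h1⟩
    · exact hbef s ⟨h1.le, hs'.2⟩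
  refine ⟨t, htp, hΩ, hnt, ?_⟩
  have hcl : IsClosed {s | 0 ≤ y s ∧ π / 2 ≤ θ s ∧ θ s ≤ 3 * π / 2} :=
    (isClosed_le continuous_const h.cy).inter
      ((isClosed_le continuous_const h.cθ).inter (isClosed_le h.cθ continuous_const))
  have hsub : closure (Ioo 0 t) ⊆ {s | 0 ≤ y s ∧ π / 2 ≤ θ s ∧ θ s ≤ 3 * π / 2} :=
    closure_minimal (fun s hs' => ⟨(hΩ s hs').1.le, (hΩ s hs').2.1.le, (hΩ s hs').2.2.le⟩) hcl
  rw [closure_Ioo htp.ne] at hsub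
  exact hsub (right_mem_Icc.2 htp.le)

/-- if `y` returns to zero inside the closed strip, then `sin θ < 0` there -/
theorem sin_at_return (h : AngTr lam x y θ) {t₁ : ℝ} (ht : 0 < t₁)
    (hΩ : ∀ t ∈ Ioo 0 t₁, AngOm y θ t) (hy : y t₁ ≤ 0) : Real.sin (θ t₁) < 0 := by
  by_contra hn
  push Not at hn
  have := h.y_mono (s := t₁ / 2) (t := t₁) (by linarith) (fun u hu =>
    (h.sin_pos_step hu.2 (fun v hv => (hΩ v ⟨by linarith [hv.1, hu.1], hv.2⟩).1) hn).le)
  linarith [(hΩ (t₁ / 2) ⟨by linarith, by linarith⟩).1]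

theorem ang_cyl_alg {m u C S r y K : ℝ} (hr : 0 < r) (hm : 0 < m) (hS1 : S ^ 2 + C ^ 2 = 1)
    (hk : m * (1 + r + |y|) ≤ K) :
    0 ≤ 2 * u * (m * C) + 2 * C * (-S * (m * (u * r * S - y / 2 * C))) + (u ^ 2 + C ^ 2) * K := by
  have hSle : S ^ 2 ≤ 1 := by nlinarith
  have hSabs : |S| ≤ 1 := by rw [← sq_le_one_iff_abs_le_one]; exact hSle
  have hys : |S * y| ≤ |y| := by
    rw [abs_mul]; nlinarith [abs_nonneg (y)]
  have b1 : -(m * (u ^ 2 + C ^ 2)) ≤ 2 * u * (m * C) := by nlinarith [sq_nonneg (u + C)]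
  have b2 : 2 * C * (S ^ 2 * m * (u * r)) ≤ m * r * (u ^ 2 + C ^ 2) := by
    have e0 : 0 ≤ m * r := by positivity
    have e1 : 2 * C * u * S ^ 2 ≤ u ^ 2 + C ^ 2 := by
      nlinarith [sq_nonneg (u - C), mul_nonneg (sq_nonneg S) (sq_nonneg (u - C)),
        mul_nonneg (sub_nonneg.2 hSle) (add_nonneg (sq_nonneg u) (sq_nonneg C))]
    nlinarith
  have b3 : -(m * |y| * (u ^ 2 + C ^ 2)) ≤ m * (S * y) * C ^ 2 := by
    have := (abs_le.1 hys).1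
    have e1 : -(m * |y| * C ^ 2) ≤ m * (S * y) * C ^ 2 := by
      have : 0 ≤ m * C ^ 2 := by positivity
      nlinarith
    have : 0 ≤ m * |y| * u ^ 2 := by positivity
    nlinarith
  have hN : 0 ≤ u ^ 2 + C ^ 2 := by positivity
  have b4 := mul_nonneg hN (sub_nonneg.2 hk)
  linarith [b1, b2, b3, b4]

/-- the cylinder is isolated -/
theorem cyl (h : AngTr lam x y θ) (hl : 0 < lam) {t₁ : ℝ} (ht : 0 ≤ t₁)
    (hx0 : 2 * lam < x 0 ^ 2) (hc : Real.cos (θ t₁) = 0) :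
    angK lam (x t₁) (y t₁) (θ t₁) ≠ 0 := by
  intro hk
  obtain ⟨c, hcc⟩ : ∃ c, c = x t₁ := ⟨_, rfl⟩
  have hcp : 0 < c := hcc ▸ h.xpos t₁
  have hs : Real.sin (θ t₁) ≠ 0 := by
    intro h0
    have := Real.sin_sq_add_cos_sq (θ t₁)
    rw [h0, hc] at this; norm_num at this
  have hc2 : c ^ 2 = 2 * lam := by
    unfold angK at hk
    rw [hc, mul_zero, sub_zero, ← hcc] at hk
    have := (mul_eq_zero.1 hk).resolve_right hs
    field_simp at this
    linarith
  have hμc : Continuous fun s => angMu (x s) (y s) := by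
    unfold angMu angA angB
    have := h.cx; have := h.cy
    exact (h.cx.div (by fun_prop) (fun s => by positivity)).mul
      (continuous_const.div (by fun_prop) (fun s => by positivity))
  have hcont : Continuous fun s => angMu (x s) (y s) * (1 + (x s + c) / (2 * x s) + |y s|) := by
    refine hμc.mul ((continuous_const.add ((h.cx.add continuous_const).div
      (continuous_const.mul h.cx) fun s => ?_)).add h.cy.abs)
    have := h.xpos s
    exact (mul_pos two_pos this).ne'
  obtain ⟨K, hK⟩ := (isCompact_Icc (a := 0) (b := t₁)).bddAbove_image hcont.continuousOn
  have hK' : ∀ s ∈ Icc 0 t₁, angMu (x s) (y s) * (1 + (x s + c) / (2 * x s) + |y s|) ≤ K :=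
    fun s hs => hK ⟨s, hs, rfl⟩
  have dN : ∀ t, HasDerivAt (fun s => ((x s - c) ^ 2 + Real.cos (θ s) ^ 2) * exp (K * s)) _ t :=
    fun t => ((((h.hx t).sub_const c).pow 2).add ((h.dC t).pow 2)).mul
      (((hasDerivAt_id t).const_mul K).exp)
  have hfin := ang_mono dN ht (fun t ht => by
    have hm := h.mu_pos t
    have hk := hK' t ⟨ht.1.le, ht.2.le⟩
    have hex := exp_pos (K * t)
    have hxp := h.xpos t
    simp only [Pi.add_apply, Pi.pow_apply, id]
    have hlx : x t / 2 - lam / x t = (x t - c) * ((x t + c) / (2 * x t)) := by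
      field_simp; linarith
    unfold angK
    rw [hlx]
    have hS1 := Real.sin_sq_add_cos_sq (θ t)
    obtain ⟨m, hm'⟩ : ∃ m, m = angMu (x t) (y t) := ⟨_, rfl⟩
    obtain ⟨u, hu'⟩ : ∃ u, u = x t - c := ⟨_, rfl⟩
    obtain ⟨C, hC'⟩ : ∃ C, C = Real.cos (θ t) := ⟨_, rfl⟩
    obtain ⟨S, hS'⟩ : ∃ S, S = Real.sin (θ t) := ⟨_, rfl⟩
    obtain ⟨r, hr'⟩ : ∃ r, r = (x t + c) / (2 * x t) := ⟨_, rfl⟩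
    have hr : 0 < r := by rw [hr']; positivity
    rw [← hm', ← hu', ← hC', ← hS', ← hr']
    rw [← hm', ← hr'] at hk
    rw [← hm'] at hm
    rw [← hS', ← hC'] at hS1
    have main := ang_cyl_alg (u := u) hr hm hS1 hk
    push_cast
    have : 0 ≤ (2 * u * (m * C) + 2 * C * (-S * (m * (u * r * S - y t / 2 * C)))
        + (u ^ 2 + C ^ 2) * K) * exp (K * t) := mul_nonneg main hex.le
    convert this using 1
    ring)
  have hz : ((x t₁ - c) ^ 2 + Real.cos (θ t₁) ^ 2) * exp (K * t₁) = 0 := by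
    rw [hc, hcc]; ring
  rw [hz] at hfin
  have h1 : (x 0 - c) ^ 2 + Real.cos (θ 0) ^ 2 ≤ 0 :=
    nonpos_of_mul_nonpos_left hfin (exp_pos _)
  have h2 : x 0 - c = 0 := by
    have : (x 0 - c) ^ 2 ≤ 0 := by nlinarith [sq_nonneg (Real.cos (θ 0))]
    exact pow_eq_zero_iff two_ne_zero |>.1 (le_antisymm this (sq_nonneg _))
  have h3 : x 0 = c := by linarith
  rw [h3] at hx0
  linarith

end AngTr

theorem ang_nhd {P : ℝ → Prop} {t : ℝ} (h : IsOpen {s | P s}) (ht : P t) :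
    ∃ e > 0, ∀ s, |s - t| < e → P s := by
  obtain ⟨e, he, hsub⟩ := Metric.isOpen_iff.1 h t ht
  exact ⟨e, he, fun s hs => hsub (by rwa [Metric.mem_ball, Real.dist_eq])⟩

namespace AngFamily
variable {lam : ℝ} {X Y T : ℝ → ℝ → ℝ}

def B (Y T : ℝ → ℝ → ℝ) (R : ℝ) : Prop :=
  ∃ τ > 0, Y R τ < 0 ∧ ∀ t ∈ Ioc 0 τ, π / 2 < T R t ∧ T R t < 3 * π / 2

def D (Y T : ℝ → ℝ → ℝ) (R : ℝ) : Prop :=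
  ∃ l > 0, Y R l = 0 ∧ T R l = 3 * π / 2 ∧ ∀ t ∈ Ioo 0 l, AngOm (Y R) (T R) t

theorem tr (hF : AngFamily lam X Y T) {R : ℝ} (hR : 0 < R) : AngTr lam (X R) (Y R) (T R) :=
  (hF.sol R).tr (by rw [hF.x0]; exact hR)

theorem open_cond (hF : AngFamily lam X Y T) (R₀ τ : ℝ) (hτ : 0 ≤ τ) {O : Set (ℝ × ℝ × ℝ)}
    (hO : IsOpen O) (hm : (X R₀ τ, Y R₀ τ, T R₀ τ) ∈ O) :
    ∃ δ > 0, ∀ R, |R - R₀| < δ → (X R τ, Y R τ, T R τ) ∈ O := by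
  obtain ⟨e, he, hsub⟩ := Metric.isOpen_iff.1 hO _ hm
  obtain ⟨δ, hδ, hc⟩ := hF.cont R₀ τ e he
  refine ⟨δ, hδ, fun R hR => hsub ?_⟩
  obtain ⟨h1, h2, h3⟩ := hc R hR τ ⟨hτ, le_rfl⟩
  rw [Metric.mem_ball, Prod.dist_eq, Prod.dist_eq, Real.dist_eq, Real.dist_eq, Real.dist_eq]
  exact max_lt h1 (max_lt h2 h3)

theorem start (hF : AngFamily lam X Y T) {R₀ : ℝ} (hR₀ : 0 < R₀) (h2 : 2 * lam < R₀ ^ 2) :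
    ∃ ε > 0, ∃ δ > 0, ∀ R, |R - R₀| < δ → 0 < R ∧ ∀ t ∈ Ioc 0 ε,
      AngOm (Y R) (T R) t := by
  have hpi := Real.pi_pos
  have hK0 : 0 < angK lam R₀ 0 (π / 2) := by
    unfold angK
    rw [Real.sin_pi_div_two]
    have : lam / R₀ < R₀ / 2 := by rw [div_lt_div_iff₀ hR₀ two_pos]; nlinarith
    linarith
  have hKc : ContinuousAt (fun p : ℝ × ℝ × ℝ => angK lam p.1 p.2.1 p.2.2) (R₀, 0, π / 2) := by
    unfold angK
    have h1 : ContinuousAt (fun p : ℝ × ℝ × ℝ => lam / p.1) (R₀, 0, π / 2) :=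
      continuousAt_const.div continuousAt_fst hR₀.ne'
    have h3 : ContinuousAt (fun p : ℝ × ℝ × ℝ => p.1 / 2) (R₀, 0, π / 2) := by fun_prop
    have h4 : ContinuousAt (fun p : ℝ × ℝ × ℝ => Real.sin p.2.2) (R₀, 0, π / 2) := by fun_prop
    have h5 : ContinuousAt (fun p : ℝ × ℝ × ℝ => p.2.1 / 2 * Real.cos p.2.2) (R₀, 0, π / 2) := by
      fun_prop
    exact ((h3.sub h1).mul h4).sub h5
  obtain ⟨η, hη, hball⟩ := Metric.eventually_nhds_iff.1 (hKc.eventually (lt_mem_nhds hK0))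
  obtain ⟨e, hee⟩ : ∃ e, e = min (η / 2) (min (π / 4) (R₀ / 2)) := ⟨_, rfl⟩
  have he : 0 < e := by rw [hee]; positivity
  have he1 : e ≤ η / 2 := hee ▸ min_le_left _ _
  have he2 : e ≤ π / 4 := hee ▸ (min_le_right _ _).trans (min_le_left _ _)
  have he3 : e ≤ R₀ / 2 := hee ▸ (min_le_right _ _).trans (min_le_right _ _)
  have htr := hF.tr hR₀
  have hop : IsOpen {s | |X R₀ s - R₀| < e ∧ |Y R₀ s| < e ∧ |T R₀ s - π / 2| < e} :=
    (isOpen_lt (htr.cx.sub continuous_const).abs continuous_const).inter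
      ((isOpen_lt htr.cy.abs continuous_const).inter
        (isOpen_lt (htr.cθ.sub continuous_const).abs continuous_const))
  obtain ⟨ε, hε, hεs⟩ := ang_nhd hop (t := 0) (by
    rw [hF.x0, hF.y0, hF.t0]; simp [he])
  obtain ⟨δ, hδ, hc⟩ := hF.cont R₀ (ε / 2) e he
  refine ⟨ε / 2, by linarith, min δ (R₀ / 2), by positivity, fun R hR => ?_⟩
  have hRp : 0 < R := by
    have := (abs_lt.1 (hR.trans_le (min_le_right _ _))).1; linarith
  refine ⟨hRp, ?_⟩
  have hcl : ∀ t ∈ Icc 0 (ε / 2), 0 < angK lam (X R t) (Y R t) (T R t) ∧ 0 < T R t ∧ T R t < π := by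
    intro t ht
    obtain ⟨a1, a2, a3⟩ := hc R (hR.trans_le (min_le_left _ _)) t ht
    obtain ⟨b1, b2, b3⟩ := hεs t (by rw [sub_zero, abs_of_nonneg ht.1]; linarith [ht.2])
    rw [abs_lt] at a1 a2 a3 b1 b2 b3
    refine ⟨?_, by linarith [a3.1, b3.1], by linarith [a3.2, b3.2]⟩
    apply hball (y := (X R t, Y R t, T R t))
    rw [Prod.dist_eq, Prod.dist_eq, Real.dist_eq, Real.dist_eq, Real.dist_eq]
    refine max_lt ?_ (max_lt ?_ ?_) <;> rw [abs_lt] <;> constructor <;> linarith [a1.1, a1.2, a2.1, a2.2, a3.1, a3.2, b1.1, b1.2, b2.1, b2.2, b3.1, b3.2]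
  have htrR := hF.tr hRp
  intro t ht
  have hy := ang_smono htrR.hy ht.1 fun u hu => mul_pos (htrR.mu_pos u)
    (Real.sin_pos_of_pos_of_lt_pi (hcl u ⟨hu.1.le, by linarith [hu.2, ht.2]⟩).2.1
      (hcl u ⟨hu.1.le, by linarith [hu.2, ht.2]⟩).2.2)
  have hθ := ang_smono htrR.hθ ht.1 fun u hu => mul_pos (htrR.mu_pos u)
    (hcl u ⟨hu.1.le, by linarith [hu.2, ht.2]⟩).1
  rw [hF.y0] at hy
  rw [hF.t0] at hθ
  exact ⟨hy, hθ, by linarith [(hcl t ⟨ht.1.le, ht.2⟩).2.2]⟩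

theorem nbr_y (hF : AngFamily lam X Y T) {R₀ : ℝ} (hR₀ : 0 < R₀) (h2 : 2 * lam < R₀ ^ 2) {τ : ℝ}
    (hτ : ∀ t ∈ Ioc 0 τ, 0 < Y R₀ t) :
    ∃ δ > 0, ∀ R, |R - R₀| < δ → 0 < R ∧ ∀ t ∈ Ioc 0 τ, 0 < Y R t := by
  obtain ⟨ε, hε, δ, hδ, hs⟩ := hF.start hR₀ h2
  obtain ⟨m, hm, hml⟩ := ang_margin (hF.tr hR₀).cy (a := ε) (b := τ)
    (fun t ht => hτ t ⟨hε.trans_le ht.1, ht.2⟩)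
  obtain ⟨δ', hδ', hc⟩ := hF.cont R₀ τ m hm
  refine ⟨min δ δ', by positivity, fun R hR => ?_⟩
  obtain ⟨hRp, hsm⟩ := hs R (hR.trans_le (min_le_left _ _))
  refine ⟨hRp, fun t ht => ?_⟩
  rcases le_or_gt t ε with h1 | h1
  · exact (hsm t ⟨ht.1, h1⟩).1
  · have h3 := (abs_lt.1 (hc R (hR.trans_le (min_le_right _ _)) t ⟨ht.1.le, ht.2⟩).2.1).1
    have := hml t ⟨h1.le, ht.2⟩
    linarith

theorem nbr_θ (hF : AngFamily lam X Y T) {R₀ : ℝ} (hR₀ : 0 < R₀) (h2 : 2 * lam < R₀ ^ 2) {τ : ℝ}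
    (hτ : ∀ t ∈ Ioc 0 τ, π / 2 < T R₀ t ∧ T R₀ t < 3 * π / 2) :
    ∃ δ > 0, ∀ R, |R - R₀| < δ → ∀ t ∈ Ioc 0 τ, π / 2 < T R t ∧ T R t < 3 * π / 2 := by
  obtain ⟨ε, hε, δ, hδ, hs⟩ := hF.start hR₀ h2
  obtain ⟨m, hm, hml⟩ := ang_margin (f := fun t => T R₀ t - π / 2) ((hF.tr hR₀).cθ.sub continuous_const)
    (a := ε) (b := τ) (fun t ht => by have := (hτ t ⟨hε.trans_le ht.1, ht.2⟩).1; linarith)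
  obtain ⟨m', hm', hml'⟩ := ang_margin (f := fun t => 3 * π / 2 - T R₀ t) (continuous_const.sub (hF.tr hR₀).cθ)
    (a := ε) (b := τ) (fun t ht => by have := (hτ t ⟨hε.trans_le ht.1, ht.2⟩).2; linarith)
  obtain ⟨δ', hδ', hc⟩ := hF.cont R₀ τ (min m m') (by positivity)
  refine ⟨min δ δ', by positivity, fun R hR => ?_⟩
  obtain ⟨hRp, hsm⟩ := hs R (hR.trans_le (min_le_left _ _))
  intro t ht
  rcases le_or_gt t ε with h1 | h1
  · exact (hsm t ⟨ht.1, h1⟩).2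
  · have h3 := abs_lt.1 (hc R (hR.trans_le (min_le_right _ _)) t ⟨ht.1.le, ht.2⟩).2.2
    have h4 := hml t ⟨h1.le, ht.2⟩
    have h5 := hml' t ⟨h1.le, ht.2⟩
    have h6 := min_le_left m m'
    have h7 := min_le_right m m'
    constructor <;> linarith [h3.1, h3.2]

theorem B_open (hF : AngFamily lam X Y T) {R₀ : ℝ} (hR₀ : 0 < R₀) (h2 : 2 * lam < R₀ ^ 2)
    (hB : B Y T R₀) : ∃ δ > 0, ∀ R, |R - R₀| < δ → B Y T R := by
  obtain ⟨τ, hτ, hy, hθ⟩ := hB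
  obtain ⟨δ, hδ, h1⟩ := hF.nbr_θ hR₀ h2 hθ
  obtain ⟨δ', hδ', h3⟩ := hF.open_cond R₀ τ hτ.le (O := {p | p.2.1 < 0})
    (isOpen_lt (by fun_prop) continuous_const) hy
  refine ⟨min δ δ', by positivity, fun R hR => ⟨τ, hτ, h3 R (hR.trans_le (min_le_right _ _)),
    h1 R (hR.trans_le (min_le_left _ _))⟩⟩

theorem B_closed (hF : AngFamily lam X Y T) (hl : 0 < lam) {R₀ : ℝ} (hR₀ : 0 < R₀)
    (h2 : 2 * lam < R₀ ^ 2) (hD : ¬ D Y T R₀)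
    (hcl : ∀ δ > 0, ∃ R, |R - R₀| < δ ∧ B Y T R) : B Y T R₀ := by
  have hpi := Real.pi_pos
  have h := hF.tr hR₀
  obtain ⟨ε, hε, δ0, hδ0, hs⟩ := hF.start hR₀ h2
  have hs0 := (hs R₀ (by simpa using hδ0)).2
  -- neighbours must be inside the strip as long as `y > 0`
  have hnb : ∀ τ > 0, (∀ t ∈ Ioc 0 τ, 0 < Y R₀ t) → ∀ O : Set (ℝ × ℝ × ℝ), IsOpen O →
      (X R₀ τ, Y R₀ τ, T R₀ τ) ∈ O → ∃ R, 0 < R ∧ (X R τ, Y R τ, T R τ) ∈ O ∧ 0 < Y R τ ∧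
        ∃ τ' , τ ≤ τ' ∧ Y R τ' < 0 ∧ ∀ t ∈ Ioc 0 τ', π / 2 < T R t ∧ T R t < 3 * π / 2 := by
    intro τ hτ hy O hO hm
    obtain ⟨δ1, hδ1, hn⟩ := hF.nbr_y hR₀ h2 hy
    obtain ⟨δ2, hδ2, ho⟩ := hF.open_cond R₀ τ hτ.le hO hm
    obtain ⟨R, hR, τ', hτ', hy', hθ'⟩ := hcl (min δ1 δ2) (by positivity)
    have h3 := hn R (hR.trans_le (min_le_left _ _))
    refine ⟨R, h3.1, ho R (hR.trans_le (min_le_right _ _)), h3.2 τ ⟨hτ, le_rfl⟩, τ', ?_, hy', hθ'⟩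
    by_contra hlt
    push Not at hlt
    linarith [h3.2 τ' ⟨hτ', hlt.le⟩]
  rcases h.exit_dich hε hs0 with hall | ⟨t1, ht1, hΩ, hnot, hy1, hθ1, hθ1'⟩
  · exfalso
    have hy1 := (hall 1 one_pos).1
    obtain ⟨t, ht, hxt⟩ := h.ne_x hl hall (min (min 1 lam) (lam * Y R₀ 1 / π)) (by positivity)
    obtain ⟨τ, hτ1, hτt⟩ : ∃ τ, 1 ≤ τ ∧ t ≤ τ := ⟨max 1 t, le_max_left _ _, le_max_right _ _⟩
    have hxτ : X R₀ τ ≤ X R₀ t := h.x_anti hτt fun u hu => (hall u (by linarith [hu.1])).2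
    have hyτ : Y R₀ 1 ≤ Y R₀ τ := h.y_mono hτ1 fun u hu =>
      (h.ne_sin hl hall u (by linarith [hu.1])).le
    have hxp := h.xpos τ
    have e1 : X R₀ τ < 1 := (hxτ.trans_lt hxt).trans_le ((min_le_left _ _).trans (min_le_left _ _))
    have e2 : X R₀ τ < lam := (hxτ.trans_lt hxt).trans_le ((min_le_left _ _).trans (min_le_right _ _))
    have e3 : X R₀ τ < lam * Y R₀ 1 / π := (hxτ.trans_lt hxt).trans_le (min_le_right _ _)
    rw [lt_div_iff₀ hpi] at e3
    obtain ⟨R, hRp, hO, hyp, τ', hττ', hy', hθ'⟩ := hnb τ (by linarith) (fun u hu => (hall u hu.1).1)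
      {p | p.1 ^ 2 < lam ∧ π * p.1 < lam * p.2.1 ∧ 0 < Real.sin p.2.2}
      (by
        have q1 : IsOpen {p : ℝ × ℝ × ℝ | p.1 ^ 2 < lam} := isOpen_lt (by fun_prop) continuous_const
        have q2 : IsOpen {p : ℝ × ℝ × ℝ | π * p.1 < lam * p.2.1} :=
          isOpen_lt (by fun_prop) (by fun_prop)
        have q3 : IsOpen {p : ℝ × ℝ × ℝ | 0 < Real.sin p.2.2} :=
          isOpen_lt continuous_const (by fun_prop)
        exact q1.inter (q2.inter q3))
      ⟨by show X R₀ τ ^ 2 < lam; nlinarith, by show π * X R₀ τ < lam * Y R₀ τ; nlinarith, h.ne_sin hl hall τ (by linarith)⟩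
    obtain ⟨o1, o2, o3⟩ := hO
    have := (hF.tr hRp).near_axis hl hττ' (fun s hs' => hθ' s ⟨by linarith [hs'.1], hs'.2⟩) hyp
      o3.le o1.le o2
    linarith
  · rcases hy1.eq_or_lt with hy0 | hypos
    · -- return to the axis of symmetry
      have hsn := h.sin_at_return ht1 hΩ hy0.ge
      have hne1 : T R₀ t1 ≠ π / 2 := by
        intro he; rw [he, Real.sin_pi_div_two] at hsn; linarith
      have hne2 : T R₀ t1 ≠ 3 * π / 2 := fun he => hD ⟨t1, ht1, hy0.symm, he, hΩ⟩
      have hop : IsOpen {s | Real.sin (T R₀ s) < 0 ∧ π / 2 < T R₀ s ∧ T R₀ s < 3 * π / 2} :=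
        (isOpen_lt (Real.continuous_sin.comp h.cθ) continuous_const).inter
          ((isOpen_lt continuous_const h.cθ).inter (isOpen_lt h.cθ continuous_const))
      obtain ⟨e, he, hes⟩ := ang_nhd hop (t := t1)
        ⟨hsn, lt_of_le_of_ne hθ1 (Ne.symm hne1), lt_of_le_of_ne hθ1' hne2⟩
      have hnear : ∀ s, t1 ≤ s → s ≤ t1 + e / 2 →
          Real.sin (T R₀ s) < 0 ∧ π / 2 < T R₀ s ∧ T R₀ s < 3 * π / 2 := fun s a b =>
        hes s (by rw [abs_of_nonneg (by linarith)]; linarith)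
      refine ⟨t1 + e / 2, by linarith, ?_, ?_⟩
      · have := ang_santi h.hy (show t1 < t1 + e / 2 by linarith) fun u hu =>
          mul_neg_of_pos_of_neg (h.mu_pos u) (hnear u hu.1.le hu.2.le).1
        linarith
      · intro t ht
        rcases lt_or_ge t t1 with h3 | h3
        · exact (hΩ t ⟨ht.1, h3⟩).2
        · exact (hnear t h3 ht.2).2
    · -- exit through the angle
      exfalso
      have hang : T R₀ t1 = π / 2 ∨ T R₀ t1 = 3 * π / 2 := by
        by_contra hc
        push Not at hc
        exact hnot ⟨hypos, lt_of_le_of_ne hθ1 (Ne.symm hc.1), lt_of_le_of_ne hθ1' hc.2⟩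
      have hcos : Real.cos (T R₀ t1) = 0 := by
        rcases hang with h3 | h3
        · rw [h3, Real.cos_pi_div_two]
        · rw [h3, show 3 * π / 2 = π / 2 + π by ring, Real.cos_add_pi, Real.cos_pi_div_two, neg_zero]
      have hk := h.cyl hl ht1.le (by rw [hF.x0]; exact h2) hcos
      have hkc : Continuous fun s => angK lam (X R₀ s) (Y R₀ s) (T R₀ s) :=
        continuous_iff_continuousAt.2 fun s => (h.dK s).continuousAt
      have hfinish : ∀ τ > t1, (∀ t ∈ Icc t1 τ, 0 < Y R₀ t) →
          (T R₀ τ < π / 2 ∨ 3 * π / 2 < T R₀ τ) → False := by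
        intro τ hτ hyt hbad
        obtain ⟨R, hRp, hO, hyp, τ', hττ', hy', hθ'⟩ := hnb τ (by linarith) (fun u hu => by
            rcases lt_or_ge u t1 with h3 | h3
            · exact (hΩ u ⟨hu.1, h3⟩).1
            · exact hyt u ⟨h3, hu.2⟩)
          {p | p.2.2 < π / 2 ∨ 3 * π / 2 < p.2.2}
          (by
            have q1 : IsOpen {p : ℝ × ℝ × ℝ | p.2.2 < π / 2} :=
              isOpen_lt (by fun_prop) continuous_const
            have q2 : IsOpen {p : ℝ × ℝ × ℝ | 3 * π / 2 < p.2.2} :=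
              isOpen_lt continuous_const (by fun_prop)
            exact q1.union q2) hbad
        have h3 := hθ' τ ⟨by linarith, hττ'⟩
        rcases hO with o | o
        · exact absurd o (not_lt.2 h3.1.le)
        · exact absurd o (not_lt.2 h3.2.le)
      rcases lt_or_gt_of_ne hk with hkn | hkp
      · obtain ⟨e, he, hes⟩ := ang_nhd (t := t1) ((isOpen_lt hkc continuous_const).inter
          (isOpen_lt continuous_const h.cy)) ⟨hkn, hypos⟩
        obtain ⟨e', hee⟩ : ∃ e', e' = min (e / 2) (t1 / 2) := ⟨_, rfl⟩
        have he0 : 0 < e' := by rw [hee]; positivity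
        have he1 : e' ≤ e / 2 := hee ▸ min_le_left _ _
        have he2 : e' ≤ t1 / 2 := hee ▸ min_le_right _ _
        have h5 : ∀ a b, t1 - e' ≤ a → a < b → b ≤ t1 + e' → T R₀ b < T R₀ a := fun a b h6 h7 h8 =>
          ang_santi h.hθ h7 fun u hu => mul_neg_of_pos_of_neg (h.mu_pos u)
            (hes u (by rw [abs_lt]; constructor <;> linarith [hu.1, hu.2])).1
        rcases hang with h3 | h3
        · refine hfinish (t1 + e') (by linarith) (fun t ht => (hes t (by
            rw [abs_lt]; constructor <;> linarith [ht.1, ht.2])).2) (Or.inl ?_)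
          rw [← h3]
          exact h5 _ _ (by linarith) (by linarith) le_rfl
        · have h6 := h5 (t1 - e') t1 le_rfl (by linarith) (by linarith)
          have h7 := (hΩ (t1 - e') ⟨by linarith, by linarith⟩).2.2
          linarith
      · obtain ⟨e, he, hes⟩ := ang_nhd (t := t1) ((isOpen_lt continuous_const hkc).inter
          (isOpen_lt continuous_const h.cy)) ⟨hkp, hypos⟩
        obtain ⟨e', hee⟩ : ∃ e', e' = min (e / 2) (t1 / 2) := ⟨_, rfl⟩
        have he0 : 0 < e' := by rw [hee]; positivity
        have he1 : e' ≤ e / 2 := hee ▸ min_le_left _ _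
        have he2 : e' ≤ t1 / 2 := hee ▸ min_le_right _ _
        have h5 : ∀ a b, t1 - e' ≤ a → a < b → b ≤ t1 + e' → T R₀ a < T R₀ b := fun a b h6 h7 h8 =>
          ang_smono h.hθ h7 fun u hu => mul_pos (h.mu_pos u)
            (hes u (by rw [abs_lt]; constructor <;> linarith [hu.1, hu.2])).1
        rcases hang with h3 | h3
        · have h6 := h5 (t1 - e') t1 le_rfl (by linarith) (by linarith)
          have h7 := (hΩ (t1 - e') ⟨by linarith, by linarith⟩).2.1
          linarith
        · refine hfinish (t1 + e') (by linarith) (fun t ht => (hes t (by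
            rw [abs_lt]; constructor <;> linarith [ht.1, ht.2])).2) (Or.inr ?_)
          rw [← h3]
          exact h5 _ _ (by linarith) (by linarith) le_rfl

theorem rho_not_B (hF : AngFamily lam X Y T) (hl : 0 < lam) {ρ : ℝ} (hρ : 0 < ρ)
    (h2 : ρ ^ 2 = 2 * (lam + 1)) : ¬ B Y T ρ := by
  rintro ⟨τ, hτ, hy, hθ⟩
  have h := hF.tr hρ
  obtain ⟨ε, hε, δ0, hδ0, hs⟩ := hF.start hρ (by linarith)
  have hs0 := (hs ρ (by simpa using hδ0)).2
  have hετ : ε ≤ τ := by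
    by_contra hlt
    push Not at hlt
    linarith [(hs0 τ ⟨hτ, hlt.le⟩).1]
  have hyε := (hs0 ε ⟨hε, le_rfl⟩).1
  obtain ⟨t, ht, hyt⟩ := intermediate_value_Icc' hετ h.cy.continuousOn ⟨hy.le, hyε.le⟩
  have htp : 0 < t := hε.trans_le ht.1
  have := h.sphere (by rw [hF.x0]; exact h2) (hF.y0 ρ) (hF.t0 ρ) t htp.le
  rw [hyt, zero_mul, add_zero] at this
  have hc := ang_cos_neg (hθ t ⟨htp, ht.2⟩).1 (hθ t ⟨htp, ht.2⟩).2
  nlinarith [h.xpos t]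

/-- shooting argument, given one good large radius -/
theorem exists_D (hF : AngFamily lam X Y T) (hl : 0 < lam) {R₁ : ℝ} (h1 : Real.sqrt (2 * (lam + 1)) ≤ R₁)
    (hB : B Y T R₁) : ∃ R, 0 < R ∧ D Y T R := by
  by_contra hno
  push Not at hno
  obtain ⟨ρ, hρd⟩ : ∃ ρ, ρ = Real.sqrt (2 * (lam + 1)) := ⟨_, rfl⟩
  have hρ : 0 < ρ := by rw [hρd]; positivity
  have hρ2 : ρ ^ 2 = 2 * (lam + 1) := by rw [hρd]; exact Real.sq_sqrt (by positivity)
  rw [← hρd] at h1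
  have hbig : ∀ R, ρ ≤ R → 0 < R ∧ 2 * lam < R ^ 2 := fun R hR => ⟨by linarith, by nlinarith⟩
  obtain ⟨S, hS⟩ : ∃ S, S = {R | B Y T R} ∩ Icc ρ R₁ := ⟨_, rfl⟩
  have hbd : BddBelow S := ⟨ρ, fun R hR => by rw [hS] at hR; exact hR.2.1⟩
  have hne : S.Nonempty := ⟨R₁, by rw [hS]; exact ⟨hB, h1, le_rfl⟩⟩
  obtain ⟨m, hm⟩ : ∃ m, m = sInf S := ⟨_, rfl⟩
  have hmρ : ρ ≤ m := by
    rw [hm]; exact le_csInf hne fun R hR => by rw [hS] at hR; exact hR.2.1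
  have hmR : m ≤ R₁ := by rw [hm]; exact csInf_le hbd (by rw [hS]; exact ⟨hB, h1, le_rfl⟩)
  have hmB : B Y T m := by
    refine hF.B_closed hl (hbig m hmρ).1 (hbig m hmρ).2 (hno m (hbig m hmρ).1) fun δ hδ => ?_
    obtain ⟨R, hR, hlt⟩ := exists_lt_of_csInf_lt hne (show sInf S < m + δ by rw [← hm]; linarith)
    have hle : m ≤ R := by rw [hm]; exact csInf_le hbd hR
    rw [hS] at hR
    exact ⟨R, by rw [abs_of_nonneg (by linarith)]; linarith, hR.1⟩
  obtain ⟨δ, hδ, hop⟩ := hF.B_open (hbig m hmρ).1 (hbig m hmρ).2 hmB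
  rcases hmρ.eq_or_lt with he | hlt
  · exact hF.rho_not_B hl hρ hρ2 (he ▸ hmB)
  · obtain ⟨R, hRe⟩ : ∃ R, R = max ρ (m - δ / 2) := ⟨_, rfl⟩
    have hRm : R < m := by rw [hRe]; exact max_lt hlt (by linarith)
    have hR1 : ρ ≤ R := hRe ▸ le_max_left _ _
    have hR2 : m - δ / 2 ≤ R := hRe ▸ le_max_right _ _
    have hRB : B Y T R := hop R (by rw [abs_lt]; constructor <;> linarith)
    have : m ≤ R := by
      rw [hm]; exact csInf_le hbd (by rw [hS]; exact ⟨hRB, hR1, by linarith⟩)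
    linarith

end AngFamily


theorem ang_le_right {f : ℝ → ℝ} (hf : Continuous f) {a b c : ℝ} (hab : a < b)
    (h : ∀ s ∈ Ioo a b, f s ≤ c) : f b ≤ c := by
  have hcl : IsClosed {s | f s ≤ c} := isClosed_le hf continuous_const
  have hsub : closure (Ioo a b) ⊆ {s | f s ≤ c} := closure_minimal h hcl
  rw [closure_Ioo hab.ne] at hsub
  exact hsub (right_mem_Icc.2 hab.le)

theorem ang_pi_lt : Real.pi < 3.15 := Real.pi_lt_d2

namespace AngTr
variable {lam : ℝ} {x y θ : ℝ → ℝ} {R : ℝ}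

theorem phase_one (h : AngTr lam x y θ) (hl : 0 < lam) (hR : 100 + 100 * lam ≤ R) (hx0 : x 0 = R)
    (hy0 : y 0 = 0) (hθ0 : θ 0 = π / 2) {t : ℝ} (ht : 0 < t) (hΩ : ∀ s ∈ Ioo 0 t, AngOm y θ s)
    (hs : ∀ s ∈ Ioo 0 t, 0 ≤ Real.sin (θ s)) (hx : R / 2 ≤ x t) :
    θ t ≤ π ∧ (∀ s ∈ Ioo 0 t, 0 ≤ angK lam (x s) (y s) (θ s)) ∧ y t ≤ 4 * π / R ∧
      -Real.cos (θ t) / R ≤ y t := by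
  have hpi := Real.pi_pos
  have hpi2 := ang_pi_lt
  have hRp : 0 < R := by linarith
  have hxs : ∀ s ∈ Ioo 0 t, R / 2 ≤ x s := fun s hs' =>
    hx.trans (h.x_anti hs'.2.le fun u hu => (hΩ u ⟨by linarith [hu.1, hs'.1], hu.2⟩).2)
  have hxR : ∀ s ∈ Ioo 0 t, x s ≤ R := fun s hs' => by
    rw [← hx0]
    exact h.x_anti hs'.1.le fun u hu => (hΩ u ⟨hu.1, by linarith [hu.2, hs'.2]⟩).2
  have hθs : ∀ s ∈ Ioo 0 t, θ s ≤ π := fun s hs' =>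
    (ang_sin_nonneg_iff (hΩ s hs').2.1.le (hΩ s hs').2.2.le).1 (hs s hs')
  have hcs : ∀ s ∈ Ioo 0 t, Real.cos (θ s) < 0 := fun s hs' =>
    ang_cos_neg (hΩ s hs').2.1 (hΩ s hs').2.2
  have hθt := ang_le_right h.cθ ht hθs
  have hk : ∀ s ∈ Ioo 0 t, R / 8 * Real.sin (θ s) ≤ angK lam (x s) (y s) (θ s) := by
    intro s hs'
    have h1 := hxs s hs'
    have hxp := h.xpos s
    have h2 : lam / x s ≤ R / 8 := by
      rw [div_le_div_iff₀ hxp (by norm_num)]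
      nlinarith
    have h3 := hcs s hs'
    have h4 := (hΩ s hs').1
    have h5 := hs s hs'
    unfold angK
    nlinarith
  have hyb : ∀ s, 0 < s → s ≤ t → y s ≤ 4 * π / R := by
    intro s hs0 hst
    have h1 := ang_anti (f := fun u => y u - 8 / R * θ u)
      (fun u => (h.hy u).sub ((h.hθ u).const_mul (8 / R))) hs0.le (fun u hu => by
        have hu' : u ∈ Ioo 0 t := ⟨hu.1, by linarith [hu.2]⟩
        have h2 := hk u hu'
        have h3 := h.mu_pos u
        have h4 : 8 / R * (R / 8 * Real.sin (θ u)) = Real.sin (θ u) := by field_simp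
        have h5 := mul_le_mul_of_nonneg_left h2 (show 0 ≤ 8 / R by positivity)
        rw [h4] at h5
        nlinarith)
    rw [hy0, hθ0] at h1
    have h2 : θ s ≤ π := by
      rcases hst.eq_or_lt with h3 | h3
      · rw [h3]; exact hθt
      · exact hθs s ⟨hs0, h3⟩
    have h3 : 8 / R * θ s ≤ 8 / R * π := mul_le_mul_of_nonneg_left h2 (by positivity)
    have h4 : 4 * π / R = 8 / R * π - 8 / R * (π / 2) := by field_simp; ring
    linarith
  refine ⟨hθt, fun s hs' => ?_, hyb t ht le_rfl, ?_⟩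
  · have h1 := hk s hs'
    have := mul_nonneg (show 0 ≤ R / 8 by positivity) (hs s hs')
    linarith
  · have h1 := ang_mono (f := fun u => y u + 1 / R * Real.cos (θ u))
      (fun u => (h.hy u).add ((h.dC u).const_mul (1 / R))) ht.le (fun u hu => by
        have h2 := hyb u hu.1 hu.2.le
        have h3 := h.mu_pos u
        have h4 := hs u hu
        have h5 : 4 * π / R ≤ 1 := by rw [div_le_one hRp]; linarith
        have h6 : angK lam (x u) (y u) (θ u) ≤ R := by
          unfold angK
          have a1 := Real.sin_le_one (θ u)
          have a2 := Real.neg_one_le_cos (θ u)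
          have a3 : 0 < lam / x u := div_pos hl (h.xpos u)
          have a4 := hxR u hu
          have a5 := h.xpos u
          have a6 := (hΩ u hu).1
          nlinarith
        have h7 : 1 / R * angK lam (x u) (y u) (θ u) ≤ 1 := by
          rw [one_div, inv_mul_le_iff₀ hRp]; linarith
        have h8 := mul_nonneg h3.le h4
        nlinarith)
    rw [hy0, hθ0, Real.cos_pi_div_two] at h1
    have : -Real.cos (θ t) / R = -(1 / R * Real.cos (θ t)) := by ring
    linarith

set_option maxHeartbeats 1000000 in
theorem no_long_phase (h : AngTr lam x y θ) (hl : 0 < lam) (hR : 100 + 100 * lam ≤ R)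
    (hx0 : x 0 = R) (hy0 : y 0 = 0) (hθ0 : θ 0 = π / 2) {t : ℝ} (ht : 0 < t)
    (hΩ : ∀ s ∈ Ioo 0 t, AngOm y θ s)
    (hs : ∀ s ∈ Ioo 0 t, 0 ≤ Real.sin (θ s)) (hx : x t = R / 2) : False := by
  have hpi := Real.pi_pos
  have hpi2 := ang_pi_lt
  have hRp : 0 < R := by linarith
  have h4R : 4 * π / R ≤ 1 := by rw [div_le_one hRp]; linarith
  obtain ⟨tc, htc, hxc⟩ := intermediate_value_Icc' ht.le h.cx.continuousOn
    (show R / 2 + 1 ∈ Icc (x t) (x 0) by rw [hx, hx0]; constructor <;> linarith)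
  have htc0 : 0 < tc := by
    rcases htc.1.eq_or_lt with h1 | h1
    · rw [← h1, hx0] at hxc; linarith
    · exact h1
  obtain ⟨ta, hta, hxa⟩ := intermediate_value_Icc' htc0.le h.cx.continuousOn
    (show R - 1 ∈ Icc (x tc) (x 0) by rw [hxc, hx0]; constructor <;> linarith)
  have hta0 : 0 < ta := by
    rcases hta.1.eq_or_lt with h1 | h1
    · rw [← h1, hx0] at hxa; linarith
    · exact h1
  have hP : ∀ s, 0 < s → s ≤ t → y s ≤ 4 * π / R ∧ -Real.cos (θ s) / R ≤ y s ∧ 0 ≤ y s ∧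
      θ s ≤ π ∧ angE lam (x s) (y s) * Real.sin (θ s) ≤ angE lam R 0 := by
    intro s hs0 hst
    have hΩ' : ∀ u ∈ Ioo 0 s, AngOm y θ u := fun u hu => hΩ u ⟨hu.1, by linarith [hu.2]⟩
    have hs' : ∀ u ∈ Ioo 0 s, 0 ≤ Real.sin (θ u) := fun u hu => hs u ⟨hu.1, by linarith [hu.2]⟩
    obtain ⟨p1, p2, p3, p4⟩ := h.phase_one hl hR hx0 hy0 hθ0 hs0 hΩ' hs' (by
      rw [← hx]
      exact h.x_anti hst fun u hu => (hΩ u ⟨by linarith [hu.1], hu.2⟩).2)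
    refine ⟨p3, p4, ?_, p1, ?_⟩
    · rw [← hy0]; exact h.y_mono hs0.le hs'
    · have := h.sin_step hs0 (fun u hu => (hΩ' u hu).1)
      rw [hx0, hy0, hθ0, Real.sin_pi_div_two, mul_one] at this
      exact this.le
  have htct : tc < t := by
    rcases htc.2.eq_or_lt with h1 | h1
    · rw [h1, hx] at hxc; linarith
    · exact h1
  have htat : ta < t := by linarith [hta.2]
  -- steep decrease of the vertical momentum
  have hSa : Real.sin (θ ta) ≤ 1 / 2 := by
    obtain ⟨p1, p2, p3, p4, p5⟩ := hP ta hta0 htat.le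
    rw [hxa] at p5
    have hy1 : y ta ^ 2 ≤ 1 := by nlinarith
    have hlog : log R ≤ log (R - 1) + 1 := by
      have e1 : log R ≤ log ((R - 1) * 2) := log_le_log hRp (by linarith)
      rw [log_mul (by linarith) (by norm_num)] at e1
      have := Real.log_two_lt_d9
      linarith
    have hE : angE lam R 0 ≤ angE lam (R - 1) (y ta) * exp (-1) := by
      unfold angE
      rw [← exp_add]
      apply exp_le_exp.2
      nlinarith
    have he : exp (-1) ≤ 1 / 2 := by
      have := Real.exp_neg_one_lt_d9; linarith
    have hEp := angE_pos lam (R - 1) (y ta)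
    have : angE lam (R - 1) (y ta) * Real.sin (θ ta) ≤ angE lam (R - 1) (y ta) * (1 / 2) := by
      nlinarith
    exact le_of_mul_le_mul_left this hEp
  have hya : 1 / (2 * R) ≤ y ta := by
    obtain ⟨p1, p2, p3, p4, p5⟩ := hP ta hta0 htat.le
    have hOm := hΩ ta ⟨hta0, htat⟩
    have hc := ang_cos_neg hOm.2.1 hOm.2.2
    have hs0 := hs ta ⟨hta0, htat⟩
    have hsq := Real.sin_sq_add_cos_sq (θ ta)
    have hc2 : 1 / 2 ≤ -Real.cos (θ ta) := by nlinarith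
    calc 1 / (2 * R) = (1 / 2) / R := by field_simp
      _ ≤ -Real.cos (θ ta) / R := by gcongr
      _ ≤ _ := p2
  obtain ⟨Em, hEm⟩ : ∃ Em, Em = exp (lam * log (R / 2) - ((R / 2 + 1) ^ 2 + 1) / 4) := ⟨_, rfl⟩
  have hEmp : 0 < Em := by rw [hEm]; exact exp_pos _
  have hdrop := ang_anti (f := fun u => angE lam (x u) (y u) * Real.sin (θ u) - Em / (4 * R) * x u)
    (fun u => (h.dES u).sub ((h.hx u).const_mul (Em / (4 * R)))) htct.le (fun u hu => by
      have hu0 : 0 < u := by linarith [hu.1]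
      obtain ⟨p1, p2, p3, p4, p5⟩ := hP u hu0 hu.2.le
      have hyu : 1 / (2 * R) ≤ y u := hya.trans (h.y_mono (by linarith [hu.1, hta.2])
        fun v hv => hs v ⟨by linarith [hv.1], by linarith [hv.2, hu.2]⟩)
      have hxu1 : R / 2 ≤ x u := by
        rw [← hx]
        exact h.x_anti hu.2.le fun v hv => (hΩ v ⟨by linarith [hv.1], hv.2⟩).2
      have hxu2 : x u ≤ R / 2 + 1 := by
        rw [← hxc]
        exact h.x_anti hu.1.le fun v hv => (hΩ v ⟨by linarith [hv.1], by linarith [hv.2, hu.2]⟩).2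
      have hEl : Em ≤ angE lam (x u) (y u) := by
        rw [hEm]; unfold angE
        apply exp_le_exp.2
        have e1 : log (R / 2) ≤ log (x u) := log_le_log (by linarith) hxu1
        have e2 : lam * log (R / 2) ≤ lam * log (x u) := mul_le_mul_of_nonneg_left e1 hl.le
        have e3 : x u ^ 2 ≤ (R / 2 + 1) ^ 2 := by
          have := h.xpos u
          gcongr
        have e4 : y u ^ 2 ≤ 1 := by nlinarith
        linarith
      have hm := h.mu_pos u
      have hcl := Real.neg_one_le_cos (θ u)
      have e5 : Em / (4 * R) = Em * (1 / (2 * R)) / 2 := by field_simp; ring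
      have e6 : Em * (1 / (2 * R)) ≤ angE lam (x u) (y u) * y u :=
        mul_le_mul hEl hyu (by positivity) (angE_pos _ _ _).le
      have e7 : 0 ≤ Em * (1 / (2 * R)) := by positivity
      rw [e5]
      obtain ⟨q, hq⟩ : ∃ q, q = Em * (1 / (2 * R)) := ⟨_, rfl⟩
      obtain ⟨m, hm'⟩ : ∃ m, m = angMu (x u) (y u) := ⟨_, rfl⟩
      rw [← hq] at e6 e7 ⊢
      rw [← hm'] at hm ⊢
      have e8 : 0 ≤ m * (angE lam (x u) (y u) * y u - q) := mul_nonneg hm.le (by linarith)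
      have e9 : 0 ≤ m * q * (1 + Real.cos (θ u)) := mul_nonneg (mul_nonneg hm.le e7) (by linarith)
      nlinarith)
  rw [hx, hxc] at hdrop
  have hc5 := (hP tc htc0 htc.2).2.2.2.2
  rw [hxc] at hc5
  have hSt : 0 ≤ Real.sin (θ t) := by
    have h1 : 0 ≤ θ t := by
      have h2 := ang_le_right (f := fun s => - θ s) h.cθ.neg ht (c := 0)
        (fun s hs' => by have := (hΩ s hs').2.1; linarith)
      linarith
    exact Real.sin_nonneg_of_nonneg_of_le_pi h1 (hP t ht le_rfl).2.2.2.1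
  have hEt := mul_nonneg (angE_pos lam (R / 2) (y t)).le hSt
  have hcon : Em / (4 * R) ≤ angE lam R 0 := by
    have : Em / (4 * R) * (R / 2 + 1) - Em / (4 * R) * (R / 2) = Em / (4 * R) := by ring
    linarith
  rw [div_le_iff₀ (by positivity)] at hcon
  have hRe : 4 * R ≤ exp (4 * R) := by linarith [Real.add_one_le_exp (4 * R)]
  have hfin : angE lam R 0 * (4 * R) < Em := by
    calc angE lam R 0 * (4 * R) ≤ angE lam R 0 * exp (4 * R) := by
          apply mul_le_mul_of_nonneg_left hRe (angE_pos _ _ _).le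
      _ < Em := by
          rw [hEm]; unfold angE
          rw [← exp_add]
          apply exp_lt_exp.2
          have e1 : log (R / 2) = log R - log 2 := log_div (by linarith) (by norm_num)
          rw [e1]
          have := Real.log_two_lt_d9
          have := Real.log_two_gt_d9
          nlinarith
  linarith

end AngTr


namespace AngTr
variable {lam : ℝ} {x y θ : ℝ → ℝ} {R : ℝ}

theorem half_bound (h : AngTr lam x y θ) (hl : 0 < lam) (hR : 100 + 100 * lam ≤ R)
    (hx0 : x 0 = R) (hy0 : y 0 = 0) (hθ0 : θ 0 = π / 2) {t : ℝ} (ht : 0 < t)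
    (hΩ : ∀ s ∈ Ioo 0 t, AngOm y θ s)
    (hs : ∀ s ∈ Ioo 0 t, 0 ≤ Real.sin (θ s)) : R / 2 ≤ x t := by
  by_contra hn
  push Not at hn
  obtain ⟨c, hc, hxc⟩ := intermediate_value_Icc' ht.le h.cx.continuousOn
    (show R / 2 ∈ Icc (x t) (x 0) by rw [hx0]; constructor <;> linarith)
  have hc0 : 0 < c := by
    rcases hc.1.eq_or_lt with h1 | h1
    · rw [← h1, hx0] at hxc; linarith
    · exact h1
  exact h.no_long_phase hl hR hx0 hy0 hθ0 hc0 (fun s hs' => hΩ s ⟨hs'.1, by linarith [hs'.2, hc.2]⟩)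
    (fun s hs' => hs s ⟨hs'.1, by linarith [hs'.2, hc.2]⟩) hxc

theorem top (h : AngTr lam x y θ) (hl : 0 < lam) (hR : 100 + 100 * lam ≤ R)
    (hx0 : x 0 = R) (hy0 : y 0 = 0) (hθ0 : θ 0 = π / 2) {ε : ℝ} (hε : 0 < ε)
    (hst : ∀ t ∈ Ioc 0 ε, AngOm y θ t) :
    ∃ tp te, 0 < tp ∧ tp < te ∧ (∀ t ∈ Ioo 0 te, AngOm y θ t) ∧ ¬ AngOm y θ te ∧ 0 ≤ y te ∧
      π / 2 ≤ θ te ∧ θ te ≤ 3 * π / 2 ∧ θ tp = π ∧ R / 2 ≤ x tp ∧ y tp ≤ 4 * π / R := by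
  have hpi := Real.pi_pos
  rcases h.exit_dich hε hst with hall | ⟨t1, ht1, hΩ, hnot, hy1, hθ1, hθ1'⟩
  · exfalso
    obtain ⟨t, ht, hxt⟩ := h.ne_x hl hall (R / 2) (by linarith)
    have := h.half_bound hl hR hx0 hy0 hθ0 ht (fun s hs => hall s hs.1)
      (fun s hs => (h.ne_sin hl hall s hs.1).le)
    linarith
  · have hex : ∃ s ∈ Ioo 0 t1, Real.sin (θ s) < 0 := by
      by_contra hn
      push Not at hn
      have hx1 := h.half_bound hl hR hx0 hy0 hθ0 ht1 hΩ hn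
      obtain ⟨p1, p2, p3, p4⟩ := h.phase_one hl hR hx0 hy0 hθ0 ht1 hΩ hn hx1
      have hm := hΩ (t1 / 2) ⟨by linarith, by linarith⟩
      have q1 : y (t1 / 2) ≤ y t1 := h.y_mono (by linarith) fun u hu =>
        hn u ⟨by linarith [hu.1], hu.2⟩
      have q2 : θ (t1 / 2) ≤ θ t1 := ang_mono h.hθ (by linarith) fun u hu =>
        mul_nonneg (h.mu_pos u).le (p2 u ⟨by linarith [hu.1], hu.2⟩)
      exact hnot ⟨by linarith [hm.1], by linarith [hm.2.1], by linarith⟩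
    obtain ⟨s, hs, hsn⟩ := hex
    have hsπ : π ≤ θ s := by
      by_contra hn
      push Not at hn
      have := (ang_sin_nonneg_iff (hΩ s hs).2.1.le (hΩ s hs).2.2.le).2 hn.le
      linarith
    obtain ⟨tp, htp, hθp⟩ := intermediate_value_Icc hs.1.le h.cθ.continuousOn
      (show π ∈ Icc (θ 0) (θ s) by rw [hθ0]; constructor <;> linarith)
    have htp0 : 0 < tp := by
      rcases htp.1.eq_or_lt with h1 | h1
      · rw [← h1, hθ0] at hθp; linarith
      · exact h1
    have htpe : tp < t1 := by linarith [htp.2, hs.2]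
    have hΩp : ∀ u ∈ Ioo 0 tp, AngOm y θ u := fun u hu => hΩ u ⟨hu.1, by linarith [hu.2]⟩
    have hsp : ∀ u ∈ Ioo 0 tp, 0 ≤ Real.sin (θ u) := fun u hu =>
      (h.sin_pos_step hu.2 (fun v hv => (hΩp v ⟨by linarith [hv.1, hu.1], hv.2⟩).1)
        (by rw [hθp, Real.sin_pi])).le
    have hxp := h.half_bound hl hR hx0 hy0 hθ0 htp0 hΩp hsp
    obtain ⟨p1, p2, p3, p4⟩ := h.phase_one hl hR hx0 hy0 hθ0 htp0 hΩp hsp hxp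
    exact ⟨tp, t1, htp0, htpe, hΩ, hnot, hy1, hθ1, hθ1', hθp, hxp, p3⟩

theorem exit_angle (h : AngTr lam x y θ) {tp te : ℝ} (htp : 0 < tp) (hte : tp < te)
    (hΩ : ∀ t ∈ Ioo 0 te, AngOm y θ t) (hnot : ¬ AngOm y θ te) (hye : 0 ≤ y te)
    (hθ1 : π / 2 ≤ θ te) (hθ1' : θ te ≤ 3 * π / 2) (hθp : θ tp = π)
    (hB : ¬ ∃ τ > 0, y τ < 0 ∧ ∀ t ∈ Ioc 0 τ, π / 2 < θ t ∧ θ t < 3 * π / 2) :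
    (∀ t ∈ Ioc tp te, Real.sin (θ t) < 0) ∧ θ te = 3 * π / 2 ∧ x te ^ 2 ≤ 2 * lam := by
  have hpi := Real.pi_pos
  have hsn : ∀ t ∈ Ioc tp te, Real.sin (θ t) < 0 := fun t ht =>
    h.sin_neg_step ht.1 (fun u hu => (hΩ u ⟨by linarith [hu.1], by linarith [hu.2, ht.2]⟩).1)
      (by rw [hθp, Real.sin_pi])
  have hse := hsn te ⟨hte, le_rfl⟩
  have hgt : π < θ te := by
    by_contra hn
    push Not at hn
    linarith [(ang_sin_nonneg_iff hθ1 hθ1').2 hn]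
  have heq : θ te = 3 * π / 2 := by
    by_contra hne
    have hlt := lt_of_le_of_ne hθ1' hne
    have hy0 : y te = 0 := by
      rcases hye.eq_or_lt with h1 | h1
      · exact h1.symm
      · exact absurd ⟨h1, by linarith, hlt⟩ hnot
    have hop : IsOpen {s | Real.sin (θ s) < 0 ∧ π / 2 < θ s ∧ θ s < 3 * π / 2} :=
      (isOpen_lt (Real.continuous_sin.comp h.cθ) continuous_const).inter
        ((isOpen_lt continuous_const h.cθ).inter (isOpen_lt h.cθ continuous_const))
    obtain ⟨e, he, hes⟩ := ang_nhd hop (t := te) ⟨hse, by linarith, hlt⟩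
    have hnear : ∀ s, te ≤ s → s ≤ te + e / 2 →
        Real.sin (θ s) < 0 ∧ π / 2 < θ s ∧ θ s < 3 * π / 2 := fun s a b =>
      hes s (by rw [abs_of_nonneg (by linarith)]; linarith)
    refine hB ⟨te + e / 2, by linarith, ?_, ?_⟩
    · have := ang_santi h.hy (show te < te + e / 2 by linarith) fun u hu =>
        mul_neg_of_pos_of_neg (h.mu_pos u) (hnear u hu.1.le hu.2.le).1
      linarith
    · intro t ht
      rcases lt_or_ge t te with h3 | h3
      · exact (hΩ t ⟨ht.1, h3⟩).2
      · exact (hnear t h3 ht.2).2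
  refine ⟨hsn, heq, ?_⟩
  have hsin : Real.sin (θ te) = -1 := by
    rw [heq, show 3 * π / 2 = π / 2 + π by ring, Real.sin_add_pi, Real.sin_pi_div_two]
  have hcos : Real.cos (θ te) = 0 := by
    rw [heq, show 3 * π / 2 = π / 2 + π by ring, Real.cos_add_pi, Real.cos_pi_div_two, neg_zero]
  have hk : 0 ≤ angK lam (x te) (y te) (θ te) := by
    by_contra hkn
    push Not at hkn
    have hkc : Continuous fun s => angK lam (x s) (y s) (θ s) :=
      continuous_iff_continuousAt.2 fun s => (h.dK s).continuousAt
    obtain ⟨e, he, hes⟩ := ang_nhd (t := te) (isOpen_lt hkc continuous_const) hkn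
    obtain ⟨e', hee⟩ : ∃ e', e' = min (e / 2) (te / 2) := ⟨_, rfl⟩
    have he0 : 0 < e' := by rw [hee]; have : 0 < te := by linarith
                            positivity
    have he1 : e' ≤ e / 2 := hee ▸ min_le_left _ _
    have he2 : e' ≤ te / 2 := hee ▸ min_le_right _ _
    have h6 := ang_santi h.hθ (show te - e' < te by linarith) fun u hu =>
      mul_neg_of_pos_of_neg (h.mu_pos u)
        (hes u (by rw [abs_lt]; constructor <;> linarith [hu.1, hu.2]))
    have h7 := (hΩ (te - e') ⟨by linarith, by linarith⟩).2.2
    linarith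
  unfold angK at hk
  rw [hsin, hcos] at hk
  have hxp := h.xpos te
  have h3 : x te / 2 ≤ lam / x te := by linarith
  rw [le_div_iff₀ hxp] at h3
  nlinarith

theorem omega_bound {x : ℝ} (hl : 0 < lam) (hx : 0 < x) :
    angE lam x 0 * (1 + x) ^ 2 ≤ exp ((lam + 2) ^ 2) := by
  have h1 : (1 + x) ^ 2 ≤ exp (2 * x) := by
    have := Real.add_one_le_exp x
    rw [show 2 * x = x + x by ring, exp_add]
    nlinarith
  calc angE lam x 0 * (1 + x) ^ 2 ≤ angE lam x 0 * exp (2 * x) :=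
        mul_le_mul_of_nonneg_left h1 (angE_pos _ _ _).le
    _ ≤ _ := by
      unfold angE
      rw [← exp_add]
      apply exp_le_exp.2
      have h2 : log x ≤ x := (Real.log_le_sub_one_of_pos hx).trans (by linarith)
      nlinarith [mul_le_mul_of_nonneg_left h2 hl.le, sq_nonneg (x / 2 - (lam + 2))]

theorem omega_end (h : AngTr lam x y θ) (hl : 0 < lam) {tp te b : ℝ} (hte : tp < te)
    (hΩ : ∀ t ∈ Ioo tp te, AngOm y θ t) (hθp : θ tp = π) (hθe : θ te = 3 * π / 2)
    (hyb : ∀ t ∈ Ioo tp te, y t ≤ b) (hb : 0 ≤ b) :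
    angE lam (x te) 0 ≤ b / 2 * exp ((lam + 2) ^ 2) := by
  obtain ⟨K, hK⟩ : ∃ K, K = exp ((lam + 2) ^ 2) := ⟨_, rfl⟩
  have hKp : 0 < K := by rw [hK]; exact exp_pos _
  rw [← hK]
  have d1 : ∀ t, HasDerivAt (fun s => angE lam (x s) 0) (angE lam (x t) 0 *
      ((lam / x t - x t / 2) * (angMu (x t) (y t) * Real.cos (θ t)))) t := fun t => by
    have hp := h.xpos t
    have e1 := (((h.hx t).log hp.ne').const_mul lam).sub
      ((((h.hx t).pow 2).add_const ((0:ℝ) ^ 2)).div_const 4)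
    refine e1.exp.congr_deriv ?_
    show angE lam (x t) 0 * _ = angE lam (x t) 0 * _
    congr 1
    field_simp
    ring
  have d2 : ∀ t, HasDerivAt (fun s => K * (1 + x s)⁻¹)
      (K * (-(angMu (x t) (y t) * Real.cos (θ t)) / (1 + x t) ^ 2)) t := fun t => by
    have hp := h.xpos t
    exact (((h.hx t).const_add 1).inv (by positivity)).const_mul K
  have d3 := ang_mono (f := fun s => angE lam (x s) 0 * Real.sin (θ s) + b / 2 * (K * (1 + x s)⁻¹))
    (fun t => ((d1 t).mul (h.dS t)).add ((d2 t).const_mul (b / 2))) hte.le (fun t ht => by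
      have hp := h.xpos t
      obtain ⟨o1, o2, o3⟩ := hΩ t ht
      have hc := ang_cos_neg o2 o3
      have hy := hyb t ht
      have hm := h.mu_pos t
      have hcl := Real.neg_one_le_cos (θ t)
      have hw := omega_bound hl hp (lam := lam)
      rw [← hK, ← le_div_iff₀ (by positivity)] at hw
      have hwp := angE_pos lam (x t) 0
      unfold angK
      obtain ⟨w, hwd⟩ : ∃ w, w = angE lam (x t) 0 := ⟨_, rfl⟩
      obtain ⟨m, hmd⟩ : ∃ m, m = angMu (x t) (y t) := ⟨_, rfl⟩
      obtain ⟨c, hcd⟩ : ∃ c, c = Real.cos (θ t) := ⟨_, rfl⟩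
      obtain ⟨q, hq⟩ : ∃ q, q = K / (1 + x t) ^ 2 := ⟨_, rfl⟩
      rw [← hwd, ← hq] at hw
      rw [← hwd] at hwp
      rw [← hmd] at hm
      rw [← hcd] at hc hcl
      simp only [← hwd, ← hmd, ← hcd]
      have e1 : K * (-(m * c) / (1 + x t) ^ 2) = -(m * c) * q := by rw [hq]; ring
      rw [e1]
      have e2 : w * (y t) ≤ q * b := mul_le_mul hw hy o1.le (hwp.le.trans hw)
      have e3 : w * y t * (-c) ≤ q * b := by
        have : 0 < w * y t := mul_pos hwp o1
        nlinarith
      have e4 : 0 ≤ (m * (-c)) * (q * b - w * y t * (-c)) :=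
        mul_nonneg (mul_nonneg hm.le (by linarith)) (by linarith)
      nlinarith)
  have hsin : Real.sin (θ te) = -1 := by
    rw [hθe, show 3 * π / 2 = π / 2 + π by ring, Real.sin_add_pi, Real.sin_pi_div_two]
  simp only [hsin, hθp, Real.sin_pi] at d3
  have hp := h.xpos te
  have hp2 := h.xpos tp
  have i1 : (1 + x te)⁻¹ ≤ 1 := inv_le_one_of_one_le₀ (by linarith)
  have i2 : 0 ≤ (1 + x tp)⁻¹ := by positivity
  have i3 : 0 ≤ b / 2 * (K * (1 + x tp)⁻¹) := by positivity
  have i4 : b / 2 * (K * (1 + x te)⁻¹) ≤ b / 2 * K := by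
    apply mul_le_mul_of_nonneg_left _ (by positivity)
    nlinarith
  linarith

end AngTr


namespace AngTr
variable {lam : ℝ} {x y θ : ℝ → ℝ} {R : ℝ}

set_option maxHeartbeats 1000000 in
theorem late (h : AngTr lam x y θ) (hl : 0 < lam) {tp te : ℝ} (hte : tp < te)
    (hΩ : ∀ t ∈ Ioo tp te, AngOm y θ t) (hθp : θ tp = π)
    (hsn : ∀ t ∈ Ioc tp te, Real.sin (θ t) < 0) (hye : 0 ≤ y te) (hyp : 0 < y tp)
    (hyp1 : y tp ≤ 1) (hxp3 : 3 < x tp) (hxe : x te < 1)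
    (hbig : exp ((lam + 2) ^ 2) < x tp * (lam * exp (-(5 / 2)))) :
    exp (-((lam + 1) * log (x te))) ≤ 1 + (lam + 1) / (lam * (exp (-(5 / 4)) / 2)) := by
  obtain ⟨t2, ht2, hx2⟩ := intermediate_value_Icc' hte.le h.cx.continuousOn
    (show (2 : ℝ) ∈ Icc (x te) (x tp) by constructor <;> linarith)
  obtain ⟨t3, ht3, hx3⟩ := intermediate_value_Icc' ht2.1 h.cx.continuousOn
    (show (3 : ℝ) ∈ Icc (x t2) (x tp) by constructor <;> linarith)
  obtain ⟨t1, ht1, hx1⟩ := intermediate_value_Icc' ht2.2 h.cx.continuousOn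
    (show (1 : ℝ) ∈ Icc (x te) (x t2) by constructor <;> linarith)
  have hxanti : ∀ s t, tp ≤ s → s ≤ t → t ≤ te → x t ≤ x s := fun s t a b c =>
    h.x_anti b fun u hu => (hΩ u ⟨by linarith [hu.1], by linarith [hu.2]⟩).2
  have hyanti : ∀ s t, tp ≤ s → s ≤ t → t ≤ te → y t ≤ y s := fun s t a b c =>
    h.y_anti b fun u hu => (hsn u ⟨by linarith [hu.1], by linarith [hu.2]⟩).le
  have hlt3 : tp < t3 := lt_of_le_of_ne ht3.1 (fun e => by rw [← e] at hx3; linarith)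
  have hlt1 : t1 < te := lt_of_le_of_ne ht1.2 (fun e => by rw [e] at hx1; linarith)
  have hWanti : ∀ s t, tp ≤ s → s ≤ t → t ≤ te →
      angE lam (x t) (y t) * (x t * Real.sin (θ t) - y t * Real.cos (θ t)) ≤
      angE lam (x s) (y s) * (x s * Real.sin (θ s) - y s * Real.cos (θ s)) := fun s t a b c =>
    ang_anti (f := fun s => angE lam (x s) (y s) * (x s * Real.sin (θ s) - y s * Real.cos (θ s)))
      h.dW b fun u hu => by
      have h1 := (hΩ u ⟨by linarith [hu.1], by linarith [hu.2]⟩).1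
      have h2 := h.mu_pos u
      have h3 := h.xpos u
      have h4 := angE_pos lam (x u) (y u)
      have : 0 ≤ lam * angMu (x u) (y u) * (y u / x u) * angE lam (x u) (y u) := by positivity
      linarith
  have hxtp := h.xpos tp
  -- the angular momentum is negative at `t2`
  have hW2 : angE lam (x t2) (y t2) * (x t2 * Real.sin (θ t2) - y t2 * Real.cos (θ t2)) ≤ 0 := by
    by_contra hn
    push Not at hn
    have hβ : ∀ t, tp ≤ t → t ≤ t2 → y tp / x tp ≤ y t / x t := fun t a b =>
      ang_mono (f := fun s => y s / x s) h.dβ a fun u hu => by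
        have h1 := hWanti u t2 (by linarith [hu.1]) (by linarith [hu.2]) ht2.2
        have h2 : 0 < x u * Real.sin (θ u) - y u * Real.cos (θ u) :=
          pos_of_mul_pos_right (hn.trans_le h1) (angE_pos _ _ _).le
        have h3 := h.mu_pos u
        positivity
    obtain ⟨q, hq⟩ : ∃ q, q = y tp / x tp * exp (-(5 / 2)) := ⟨_, rfl⟩
    have hqp : 0 < q := by rw [hq]; positivity
    have hd := ang_anti (f := fun s => angE lam (x s) (y s) *
      (x s * Real.sin (θ s) - y s * Real.cos (θ s)) - (lam * q) * x s)
      (fun s => (h.dW s).sub ((h.hx s).const_mul (lam * q))) ht3.2 (fun u hu => by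
        have a1 := hβ u (by linarith [hu.1]) hu.2.le
        have a2 := hxanti t3 u hlt3.le hu.1.le (by linarith [hu.2, ht2.2])
        have a3 := hxanti u t2 (by linarith [hu.1]) hu.2.le ht2.2
        have a4 := (hyanti tp u le_rfl (by linarith [hu.1]) (by linarith [hu.2, ht2.2])).trans hyp1
        have a5 := (hΩ u ⟨by linarith [hu.1], by linarith [hu.2, ht2.2]⟩).1
        rw [hx3] at a2
        rw [hx2] at a3
        have a6 : exp (-(5 / 2)) ≤ angE lam (x u) (y u) := by
          unfold angE
          apply exp_le_exp.2
          have := mul_nonneg hl.le (log_nonneg (show 1 ≤ x u by linarith))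
          nlinarith
        have a7 : q ≤ y u / x u * angE lam (x u) (y u) := by
          rw [hq]
          have := h.xpos u
          exact mul_le_mul a1 a6 (exp_pos _).le (by positivity)
        have a8 := Real.neg_one_le_cos (θ u)
        have a9 := h.mu_pos u
        have b1 : q * (-Real.cos (θ u)) ≤ q := by nlinarith
        have b2 := mul_nonneg (mul_nonneg hl.le a9.le)
          (show 0 ≤ y u / x u * angE lam (x u) (y u) - q * (-Real.cos (θ u)) by linarith)
        nlinarith)
    have hd2 := hWanti tp t3 le_rfl hlt3.le (by linarith [ht3.2, ht2.2])
    rw [hθp, Real.sin_pi, Real.cos_pi] at hd2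
    rw [hx2, hx3] at hd
    rw [hx3] at hd2
    rw [hx2] at hn
    have hE1 : angE lam (x tp) (y tp) ≤ angE lam (x tp) 0 := by
      unfold angE
      apply exp_le_exp.2
      nlinarith
    have hw := omega_bound hl hxtp (lam := lam)
    have hwp := angE_pos lam (x tp) 0
    have hc1 : lam * q ≤ angE lam (x tp) 0 * y tp := by nlinarith
    have hc2 : lam * q = (lam * exp (-(5 / 2)) / x tp) * y tp := by rw [hq]; field_simp
    rw [hc2] at hc1
    have hc3 := le_of_mul_le_mul_right hc1 hyp
    rw [div_le_iff₀ hxtp] at hc3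
    nlinarith
  -- quantitative version at `t1`
  have hyt1 : 0 < y t1 := (hΩ t1 ⟨by linarith [ht1.1, ht3.2], hlt1⟩).1
  obtain ⟨c, hc⟩ : ∃ c, c = exp (-(5 / 4)) / 2 := ⟨_, rfl⟩
  have hcp : 0 < c := by rw [hc]; positivity
  rw [← hc]
  obtain ⟨w, hw⟩ : ∃ w, w = lam * (y t1 * c) := ⟨_, rfl⟩
  have hwp : 0 < w := by rw [hw]; positivity
  have hW1 : angE lam (x t1) (y t1) * (x t1 * Real.sin (θ t1) - y t1 * Real.cos (θ t1)) ≤ -w := by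
    have hd := ang_anti (f := fun s => angE lam (x s) (y s) *
      (x s * Real.sin (θ s) - y s * Real.cos (θ s)) - w * x s)
      (fun s => (h.dW s).sub ((h.hx s).const_mul w)) ht1.1 (fun u hu => by
        have hptu : tp ≤ u := by linarith [hu.1, ht2.1]
        have a1 := hyanti u t1 hptu hu.2.le hlt1.le
        have a2 := hxanti t2 u ht2.1 hu.1.le (by linarith [hu.2])
        have a3 := hxanti u t1 hptu hu.2.le hlt1.le
        have a4 := (hyanti tp u le_rfl hptu (by linarith [hu.2])).trans hyp1
        rw [hx2] at a2
        rw [hx1] at a3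
        have a6 : exp (-(5 / 4)) ≤ angE lam (x u) (y u) := by
          unfold angE
          apply exp_le_exp.2
          have := mul_nonneg hl.le (log_nonneg a3)
          nlinarith
        have hxu := h.xpos u
        have a5 : y t1 / 2 ≤ y u / x u := by
          rw [div_le_div_iff₀ (by norm_num) hxu]; nlinarith
        have a7 : y t1 * c ≤ y u / x u * angE lam (x u) (y u) := by
          have e : y t1 * c = y t1 / 2 * exp (-(5 / 4)) := by rw [hc]; ring
          rw [e]
          exact mul_le_mul a5 a6 (exp_pos _).le (le_trans (by positivity) a5)
        have a8 := Real.neg_one_le_cos (θ u)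
        have a9 := h.mu_pos u
        have b0 : 0 < y t1 * c := by positivity
        obtain ⟨q, hq⟩ : ∃ q, q = y t1 * c := ⟨_, rfl⟩
        rw [hw]
        rw [← hq] at a7 b0 ⊢
        have b1 : q * (-Real.cos (θ u)) ≤ q := by nlinarith
        have b2 := mul_nonneg (mul_nonneg hl.le a9.le)
          (show 0 ≤ y u / x u * angE lam (x u) (y u) - q * (-Real.cos (θ u)) by linarith)
        nlinarith)
    rw [hx2, hx1] at hd
    rw [hx2] at hW2
    rw [hx1]
    linarith
  have dG : ∀ t, HasDerivAt (fun s => exp (-((lam + 1) * log (x s))))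
      (exp (-((lam + 1) * log (x t))) * (-((lam + 1) * (angMu (x t) (y t) * Real.cos (θ t) / x t)))) t :=
    fun t => (((h.hx t).log (h.xpos t).ne').const_mul (lam + 1)).neg.exp
  have hfin := ang_anti (f := fun s => y s / x s + w / (lam + 1) * exp (-((lam + 1) * log (x s))))
    (fun s => (h.dβ s).add ((dG s).const_mul (w / (lam + 1)))) hlt1.le (fun u hu => by
      have hptu : tp ≤ u := by linarith [hu.1, ht2.1, ht1.1]
      have a1 := (hWanti t1 u (by linarith [ht2.1, ht1.1]) hu.1.le hu.2.le).trans hW1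
      have hxu := h.xpos u
      have hm := h.mu_pos u
      have a8 := Real.neg_one_le_cos (θ u)
      have hEp := angE_pos lam (x u) (y u)
      obtain ⟨G, hG⟩ : ∃ G, G = exp (-((lam + 1) * log (x u))) := ⟨_, rfl⟩
      have hGp : 0 < G := by rw [hG]; exact exp_pos _
      rw [← hG]
      have a2 : angE lam (x u) (y u) * (G * x u) ≤ 1 := by
        have : G * x u = exp (-(lam * log (x u))) := by
          rw [hG]
          nth_rewrite 2 [← exp_log hxu]
          rw [← exp_add]
          congr 1; ring
        rw [this]
        unfold angE
        rw [← exp_add, exp_le_one_iff]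
        nlinarith [sq_nonneg (x u), sq_nonneg (y u)]
      obtain ⟨E, hE⟩ : ∃ E, E = angE lam (x u) (y u) := ⟨_, rfl⟩
      obtain ⟨J, hJ⟩ : ∃ J, J = x u * Real.sin (θ u) - y u * Real.cos (θ u) := ⟨_, rfl⟩
      rw [← hE] at a1 a2 hEp
      rw [← hJ] at a1 ⊢
      have a3 : J ≤ -(w * (G * x u)) := by
        have e1 : E * J ≤ E * (-(w * (G * x u))) := by nlinarith
        exact le_of_mul_le_mul_left e1 hEp
      obtain ⟨m, hmd⟩ : ∃ m, m = angMu (x u) (y u) := ⟨_, rfl⟩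
      rw [← hmd] at hm ⊢
      have e2 : m * J / x u ^ 2 ≤ m * (-(w * (G * x u))) / x u ^ 2 := by gcongr
      have e3 : m * (-(w * (G * x u))) / x u ^ 2 = -(m * w * G / x u) := by field_simp
      have e4 : w / (lam + 1) * (G * (-((lam + 1) * (m * Real.cos (θ u) / x u)))) =
          (m * w * G / x u) * (-Real.cos (θ u)) := by field_simp
      have e5 : 0 < m * w * G / x u := by positivity
      rw [e4]
      nlinarith)
  rw [hx1, log_one, mul_zero, neg_zero, exp_zero, div_one] at hfin
  have hβe : 0 ≤ y te / x te := div_nonneg hye (h.xpos te).le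
  obtain ⟨G, hG⟩ : ∃ G, G = exp (-((lam + 1) * log (x te))) := ⟨_, rfl⟩
  rw [← hG] at hfin ⊢
  have e1 : w / (lam + 1) * G ≤ w / (lam + 1) * (1 + (lam + 1) / (lam * c)) := by
    have : w / (lam + 1) * (1 + (lam + 1) / (lam * c)) = y t1 + w / (lam + 1) * 1 := by
      rw [hw]; field_simp; ring
    linarith
  exact le_of_mul_le_mul_left e1 (by positivity)

end AngTr

theorem AngFamily.exists_B {lam : ℝ} {X Y T : ℝ → ℝ → ℝ} (hF : AngFamily lam X Y T)
    (hl : 0 < lam) : ∃ R, Real.sqrt (2 * (lam + 1)) ≤ R ∧ AngFamily.B Y T R := by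
  have hpi := Real.pi_pos
  have hpi2 := ang_pi_lt
  obtain ⟨K, hK⟩ : ∃ K, K = exp ((lam + 2) ^ 2) := ⟨_, rfl⟩
  have hKp : 0 < K := by rw [hK]; exact exp_pos _
  obtain ⟨V, hV⟩ : ∃ V, V = 1 + (lam + 1) / (lam * (exp (-(5 / 4)) / 2)) := ⟨_, rfl⟩
  have hV1 : 1 ≤ V := by
    rw [hV]
    have : 0 ≤ (lam + 1) / (lam * (exp (-(5 / 4)) / 2)) := by positivity
    linarith
  obtain ⟨v, hv⟩ : ∃ v, v = log V / (lam + 1) := ⟨_, rfl⟩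
  have hv0 : 0 ≤ v := by rw [hv]; exact div_nonneg (log_nonneg hV1) (by linarith)
  obtain ⟨c1, hc1⟩ : ∃ c, c = 2 * K / (lam * exp (-(5 / 2))) := ⟨_, rfl⟩
  have hc1p : 0 < c1 := by rw [hc1]; positivity
  obtain ⟨c2, hc2⟩ : ∃ c, c = 2 * π * K / exp (-(lam * v) - lam / 2) := ⟨_, rfl⟩
  have hc2p : 0 < c2 := by rw [hc2]; positivity
  obtain ⟨R, hR⟩ : ∃ R, R = 100 + 100 * lam + c1 + c2 := ⟨_, rfl⟩
  have hR1 : 100 + 100 * lam ≤ R := by linarith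
  have hRp : 0 < R := by linarith
  have hRc1 : c1 < R := by linarith
  have hRc2 : c2 < R := by linarith
  rw [hc1, div_lt_iff₀ (by positivity)] at hRc1
  rw [hc2, div_lt_iff₀ (exp_pos _)] at hRc2
  refine ⟨R, ?_, ?_⟩
  · rw [Real.sqrt_le_left hRp.le]
    nlinarith
  by_contra hB
  have h := hF.tr hRp
  obtain ⟨ε, hε, δ0, hδ0, hs⟩ := hF.start hRp (by nlinarith)
  have hs0 := (hs R (by simpa using hδ0)).2
  obtain ⟨tp, te, htp, hte, hΩ, hnot, hye, hθ1, hθ1', hθp, hxp, hyp⟩ :=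
    h.top hl hR1 (hF.x0 R) (hF.y0 R) (hF.t0 R) hε hs0
  obtain ⟨hsn, hθe, hxe⟩ := h.exit_angle htp hte hΩ hnot hye hθ1 hθ1' hθp hB
  have hΩ' : ∀ t ∈ Ioo tp te, AngOm (Y R) (T R) t := fun t ht => hΩ t ⟨by linarith [ht.1], ht.2⟩
  have hyp0 := (hΩ tp ⟨htp, hte⟩).1
  have hw := h.omega_end hl hte hΩ' hθp hθe (fun t ht => h.y_anti ht.1.le fun u hu =>
    (hsn u ⟨hu.1, by linarith [hu.2, ht.2]⟩).le) hyp0.le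
  rw [← hK] at hw
  have hw2 : angE lam (X R te) 0 < exp (-(lam * v) - lam / 2) := by
    have e1 : Y R tp / 2 * K ≤ (4 * π / R) / 2 * K := by gcongr
    have e2 : (4 * π / R) / 2 * K = 2 * π * K / R := by field_simp; ring
    have e3 : 2 * π * K / R < exp (-(lam * v) - lam / 2) := by
      rw [div_lt_iff₀ hRp]; linarith
    linarith
  unfold angE at hw2
  have hw3 := exp_lt_exp.1 hw2
  have hlog : log (X R te) < -v := by
    by_contra hn
    push Not at hn
    nlinarith [mul_le_mul_of_nonneg_left hn hl.le]
  have hxe1 : X R te < 1 := by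
    by_contra hn
    push Not at hn
    linarith [log_nonneg hn]
  have hL := h.late hl hte hΩ' hθp hsn hye hyp0 (hyp.trans (by
    rw [div_le_one hRp]; linarith)) (by linarith) hxe1 (by
    rw [← hK]
    have : 0 < lam * exp (-(5 / 2)) := by positivity
    nlinarith)
  rw [← hV] at hL
  have hL2 := log_le_log (exp_pos _) hL
  rw [log_exp] at hL2
  have : v * (lam + 1) = log V := by rw [hv]; field_simp
  nlinarith


theorem AngSol.reflect {lam : ℝ} {x y θ : ℝ → ℝ} (h : AngSol lam x y θ) (c d : ℝ)
    (hc : ∀ a, Real.cos (d - a) = -Real.cos a) (hs : ∀ a, Real.sin (d - a) = Real.sin a) :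
    AngSol lam (fun s => x (c - s)) (fun s => -y (c - s)) (fun s => d - θ (c - s)) := by
  have hB : ∀ z, angB (-z) = angB z := fun z => by unfold angB; rw [neg_sq]
  have hH : ∀ z, angH (-z) = -angH z := fun z => by unfold angH; rw [neg_sq, neg_div]
  refine ⟨fun t => ?_, fun t => ?_, fun t => ?_⟩
  · refine ((h.hx (c - t)).comp_const_sub c t).congr_deriv ?_
    simp only [angF1, hB, hc]; ring
  · refine ((h.hy (c - t)).comp_const_sub c t).neg.congr_deriv ?_
    simp only [angF2, hB, hs]; ring
  · refine (((h.hθ (c - t)).comp_const_sub c t).const_sub d).congr_deriv ?_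
    simp only [angF3, hB, hH, hs, hc]; ring

theorem ang_closed_orbit (lam : ℝ) (hl : 0 < lam) : ∃ (x y θ : ℝ → ℝ) (P : ℝ),
    AngTr lam x y θ ∧ 0 < P ∧ (∀ s, x (s + P) = x s) ∧ (∀ s, y (s + P) = y s) ∧
    InjOn (fun s => (x s, y s)) (Ico 0 P) := by
  have hpi := Real.pi_pos
  obtain ⟨X, Y, T, hF⟩ := ang_family_exists lam
  obtain ⟨R₁, hR₁, hB⟩ := hF.exists_B hl
  obtain ⟨R, hR, l, hlp, hyl, hθl, hΩ⟩ := hF.exists_D hl hR₁ hB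
  have h := hF.tr hR
  have hS := hF.sol R
  have hc3 : ∀ a, Real.cos (3 * π - a) = -Real.cos a := fun a => by
    rw [show 3 * π - a = (π - a) + 2 * π by ring, Real.cos_add_two_pi, Real.cos_pi_sub]
  have hs3 : ∀ a, Real.sin (3 * π - a) = Real.sin a := fun a => by
    rw [show 3 * π - a = (π - a) + 2 * π by ring, Real.sin_add_two_pi, Real.sin_pi_sub]
  obtain ⟨a1, a2, -⟩ := hS.unique (hS.reflect 0 π Real.cos_pi_sub Real.sin_pi_sub) 0
    (by simp) (by simp [hF.y0]) (by simp [hF.t0]; ring)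
  obtain ⟨b1, b2, -⟩ := hS.unique (hS.reflect (2 * l) (3 * π) hc3 hs3) l
    (by rw [show 2 * l - l = l by ring]) (by rw [show 2 * l - l = l by ring, hyl, neg_zero])
    (by rw [show 2 * l - l = l by ring, hθl]; ring)
  have a1' : ∀ s, X R s = X R (0 - s) := fun s => congrFun a1 s
  have a2' : ∀ s, Y R s = -Y R (0 - s) := fun s => congrFun a2 s
  have b1' : ∀ s, X R s = X R (2 * l - s) := fun s => congrFun b1 s
  have b2' : ∀ s, Y R s = -Y R (2 * l - s) := fun s => congrFun b2 s
  refine ⟨X R, Y R, T R, 2 * l, h, by linarith, fun s => ?_, fun s => ?_, ?_⟩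
  · rw [b1', a1' s]; congr 1; ring
  · rw [b2', a2' s]; congr 2; ring
  have hx : ∀ s t, 0 ≤ s → s < t → t ≤ l → X R t < X R s := fun s t p q r =>
    h.x_santi q fun u hu => (hΩ u ⟨by linarith [hu.1], by linarith [hu.2]⟩).2
  have hinj : ∀ s t, 0 ≤ s → s ≤ l → 0 ≤ t → t ≤ l → X R s = X R t → s = t := by
    intro s t p q p' q' e
    rcases lt_trichotomy s t with h1 | h1 | h1
    · linarith [hx s t p h1 q']
    · exact h1
    · linarith [hx t s p' h1 q]
  have hyn : ∀ s, l < s → s < 2 * l → Y R s < 0 := fun s p q => by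
    have := (hΩ (2 * l - s) ⟨by linarith, by linarith⟩).1
    rw [b2' s]; linarith
  have hyp : ∀ s, 0 ≤ s → s ≤ l → 0 ≤ Y R s := fun s p q => by
    rcases p.eq_or_lt with p | p
    · rw [← p, hF.y0]
    · rcases q.eq_or_lt with q | q
      · rw [q, hyl]
      · exact (hΩ s ⟨p, q⟩).1.le
  intro s hs t ht e
  have e1 : X R s = X R t := congrArg Prod.fst e
  have e2 : Y R s = Y R t := congrArg Prod.snd e
  rcases le_or_gt s l with p | p <;> rcases le_or_gt t l with q | q
  · exact hinj s t hs.1 p ht.1 q e1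
  · linarith [hyp s hs.1 p, hyn t q ht.2]
  · linarith [hyp t ht.1 q, hyn s p hs.2]
  · rw [b1' s, b1' t] at e1
    have := hinj _ _ (by linarith [hs.2]) (by linarith) (by linarith [ht.2]) (by linarith) e1
    linarith

theorem ang_c2 {f f1 f2 : ℝ → ℝ} (h1 : ∀ s, HasDerivAt f (f1 s) s)
    (h2 : ∀ s, HasDerivAt f1 (f2 s) s) (hc : Continuous f2) :
    ContDiff ℝ 2 f ∧ deriv f = f1 ∧ deriv f1 = f2 := by
  have e1 : deriv f = f1 := funext fun s => (h1 s).deriv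
  have e2 : deriv f1 = f2 := funext fun s => (h2 s).deriv
  refine ⟨?_, e1, e2⟩
  rw [show (2 : WithTop ℕ∞) = 1 + 1 by norm_num, contDiff_succ_iff_deriv]
  refine ⟨fun s => (h1 s).differentiableAt, by simp, ?_⟩
  rw [e1, contDiff_one_iff_deriv]
  refine ⟨fun s => (h2 s).differentiableAt, ?_⟩
  rw [e2]; exact hc

theorem ang_reparam {f : ℝ → ℝ} (hf : Continuous f) (hpos : ∀ t, 0 < f t) {P : ℝ} (hP : 0 < P)
    (hper : ∀ t, f (t + P) = f t) : ∃ (p : ℝ) (σ : ℝ → ℝ), 0 < p ∧ StrictMono σ ∧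
      (∀ s, HasDerivAt σ (f (σ s))⁻¹ s) ∧ (∀ s, σ (s + p) = σ s + P) ∧ σ 0 = 0 := by
  have hPer : Function.Periodic f P := hper
  obtain ⟨τ, hτ⟩ : ∃ τ : ℝ → ℝ, τ = fun t => ∫ u in (0:ℝ)..t, f u := ⟨_, rfl⟩
  have hd : ∀ t, HasDerivAt τ (f t) t := fun t => by
    rw [hτ]
    exact hf.integral_hasStrictDerivAt 0 t |>.hasDerivAt
  have hmono : StrictMono τ := strictMono_of_deriv_pos fun t => by rw [(hd t).deriv]; exact hpos t
  have hcont : Continuous τ := continuous_iff_continuousAt.2 fun t => (hd t).continuousAt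
  have hsurj : Function.Surjective τ := by
    apply hcont.surjective
    · rw [hτ]
      exact hPer.tendsto_atTop_intervalIntegral_of_pos' (hf.intervalIntegrable 0 P) hpos hP
    · rw [hτ]
      exact hPer.tendsto_atBot_intervalIntegral_of_pos' (hf.intervalIntegrable 0 P) hpos hP
  have hτ0 : τ 0 = 0 := by rw [hτ]; simp
  have hτP : ∀ t, τ (t + P) = τ t + τ P := fun t => by
    have e : ∀ t, HasDerivAt (fun s => τ (s + P) - τ s) 0 t := fun t => by
      refine (((hd (t + P)).comp_add_const t P).sub (hd t)).congr_deriv ?_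
      rw [hper]; ring
    have := is_const_of_deriv_eq_zero (fun t => (e t).differentiableAt) (fun t => (e t).deriv) t 0
    simp only [zero_add, hτ0] at this
    linarith
  obtain ⟨e, he⟩ : ∃ e : ℝ ≃o ℝ, ∀ t, e t = τ t :=
    ⟨hmono.orderIsoOfSurjective τ hsurj, fun t => rfl⟩
  have hr : ∀ s, τ (e.symm s) = s := fun s => by rw [← he, e.apply_symm_apply]
  have hinj := hmono.injective
  refine ⟨τ P, e.symm, ?_, e.symm.strictMono, fun s => ?_, fun s => ?_, ?_⟩
  · rw [← hτ0]; exact hmono hP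
  · exact HasDerivAt.of_local_left_inverse e.symm.continuous.continuousAt (hd _) (hpos _).ne'
      (Filter.Eventually.of_forall hr)
  · apply hinj; rw [hr, hτP, hr]
  · apply hinj; rw [hr, hτ0]


theorem AngTr.du {lam : ℝ} {x y θ : ℝ → ℝ} (h : AngTr lam x y θ) (t : ℝ) :
    HasDerivAt (fun s => Real.cos (θ s) / angE lam (x s) (y s))
      (angMu (x t) (y t) / angE lam (x t) (y t) *
        (-(lam / x t - x t / 2) * (Real.cos (θ t) ^ 2 - Real.sin (θ t) ^ 2)
          + y t * (Real.cos (θ t) * Real.sin (θ t)))) t := by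
  have hE := angE_pos lam (x t) (y t)
  refine ((h.dC t).div (h.dE t) hE.ne').congr_deriv ?_
  unfold angK
  rw [div_eq_iff (by positivity)]
  field_simp
  ring

theorem AngTr.dw {lam : ℝ} {x y θ : ℝ → ℝ} (h : AngTr lam x y θ) (t : ℝ) :
    HasDerivAt (fun s => Real.sin (θ s) / angE lam (x s) (y s))
      (angMu (x t) (y t) / angE lam (x t) (y t) *
        (y t / 2 * (Real.sin (θ t) ^ 2 - Real.cos (θ t) ^ 2)
          - 2 * (lam / x t - x t / 2) * (Real.cos (θ t) * Real.sin (θ t)))) t := by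
  have hE := angE_pos lam (x t) (y t)
  refine ((h.dS t).div (h.dE t) hE.ne').congr_deriv ?_
  unfold angK
  rw [div_eq_iff (by positivity)]
  field_simp
  ring

/-- Existence of λ-Angenent curves: for every `λ > 0` there is a nonconstant periodic
embedded regular `C²` curve in the half-plane `{x > 0}` satisfying the geodesic
equations of the conformal metric `e^{2φ}(dx² + dy²)` with
`φ(x,y) = λ ln x − (x² + y²)/4`. -/
theorem exists_lambda_angenent_curve (lam : ℝ) (hlam : 0 < lam) :
    ∃ (p : ℝ) (x y : ℝ → ℝ), 0 < p ∧
      ContDiff ℝ 2 x ∧ ContDiff ℝ 2 y ∧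
      (∀ s : ℝ, x (s + p) = x s ∧ y (s + p) = y s) ∧
      (∃ s : ℝ, (x s, y s) ≠ (x 0, y 0)) ∧
      Set.InjOn (fun s => (x s, y s)) (Set.Ico 0 p) ∧
      (∀ s : ℝ, 0 < x s) ∧
      (∀ s : ℝ, 0 < (deriv x s) ^ 2 + (deriv y s) ^ 2) ∧
      (∀ s : ℝ,
        deriv (deriv x) s
          + (lam / x s - x s / 2) * ((deriv x s) ^ 2 - (deriv y s) ^ 2)
          + 2 * (-(y s) / 2) * deriv x s * deriv y s = 0 ∧
        deriv (deriv y) s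
          + (-(y s) / 2) * ((deriv y s) ^ 2 - (deriv x s) ^ 2)
          + 2 * (lam / x s - x s / 2) * deriv x s * deriv y s = 0) := by

  obtain ⟨x, y, θ, P, h, hP, hxP, hyP, hinj⟩ := ang_closed_orbit lam hlam
  have hcE : Continuous fun t => angE lam (x t) (y t) :=
    continuous_iff_continuousAt.2 fun t => (h.dE t).continuousAt
  have hcM : Continuous fun t => angMu (x t) (y t) := by
    have hx := h.cx
    have hy := h.cy
    unfold angMu angA angB
    exact (hx.div (by fun_prop) (fun t => by positivity)).mul
      (continuous_const.div (by fun_prop) (fun t => by positivity))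
  obtain ⟨p, σ, hp, hσm, hσd, hσP, hσ0⟩ := ang_reparam
    (f := fun t => angMu (x t) (y t) * angE lam (x t) (y t)) (hcM.mul hcE)
    (fun t => mul_pos (h.mu_pos t) (angE_pos _ _ _)) hP (fun t => by rw [hxP, hyP])
  have hσc : Continuous σ := continuous_iff_continuousAt.2 fun t => (hσd t).continuousAt
  obtain ⟨u, hu⟩ : ∃ u : ℝ → ℝ, u = fun s => Real.cos (θ (σ s)) / angE lam (x (σ s)) (y (σ s)) :=
    ⟨_, rfl⟩
  obtain ⟨w, hw⟩ : ∃ w : ℝ → ℝ, w = fun s => Real.sin (θ (σ s)) / angE lam (x (σ s)) (y (σ s)) :=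
    ⟨_, rfl⟩
  have dx : ∀ s, HasDerivAt (fun s => x (σ s)) (u s) s := fun s => by
    have hE := angE_pos lam (x (σ s)) (y (σ s))
    have hm := h.mu_pos (σ s)
    refine ((h.hx (σ s)).comp s (hσd s)).congr_deriv ?_
    rw [hu]; field_simp
  have dy : ∀ s, HasDerivAt (fun s => y (σ s)) (w s) s := fun s => by
    have hE := angE_pos lam (x (σ s)) (y (σ s))
    have hm := h.mu_pos (σ s)
    refine ((h.hy (σ s)).comp s (hσd s)).congr_deriv ?_
    rw [hw]; field_simp
  have d2x : ∀ s, HasDerivAt u (-(lam / x (σ s) - x (σ s) / 2) * (u s ^ 2 - w s ^ 2)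
      + y (σ s) * (u s * w s)) s := fun s => by
    have hE := angE_pos lam (x (σ s)) (y (σ s))
    have hm := h.mu_pos (σ s)
    have hx := h.xpos (σ s)
    have e := (h.du (σ s)).comp s (hσd s)
    rw [hu, hw]
    refine e.congr_deriv ?_
    field_simp
  have d2y : ∀ s, HasDerivAt w (y (σ s) / 2 * (w s ^ 2 - u s ^ 2)
      - 2 * (lam / x (σ s) - x (σ s) / 2) * (u s * w s)) s := fun s => by
    have hE := angE_pos lam (x (σ s)) (y (σ s))
    have hm := h.mu_pos (σ s)
    have hx := h.xpos (σ s)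
    have e := (h.dw (σ s)).comp s (hσd s)
    rw [hu, hw]
    refine e.congr_deriv ?_
    field_simp
  have cu : Continuous u := continuous_iff_continuousAt.2 fun t => (d2x t).continuousAt
  have cw : Continuous w := continuous_iff_continuousAt.2 fun t => (d2y t).continuousAt
  have cx : Continuous fun s => x (σ s) := h.cx.comp hσc
  have cy : Continuous fun s => y (σ s) := h.cy.comp hσc
  have cl : Continuous fun s => lam / x (σ s) :=
    continuous_const.div cx fun s => (h.xpos _).ne'
  obtain ⟨kx, kx1, kx2⟩ := ang_c2 dx d2x
    (((cl.sub (cx.div_const 2)).neg.mul ((cu.pow 2).sub (cw.pow 2))).add (cy.mul (cu.mul cw)))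
  obtain ⟨ky, ky1, ky2⟩ := ang_c2 dy d2y
    (((cy.div_const 2).mul ((cw.pow 2).sub (cu.pow 2))).sub
      ((continuous_const.mul (cl.sub (cx.div_const 2))).mul (cu.mul cw)))
  have hσp : σ p = P := by have := hσP 0; rwa [zero_add, hσ0, zero_add] at this
  have hinj2 : InjOn (fun s => (x (σ s), y (σ s))) (Ico 0 p) := by
    intro s hs t ht e
    have hmem : ∀ s ∈ Ico 0 p, σ s ∈ Ico 0 P := fun s hs => by
      constructor
      · rw [← hσ0]; exact hσm.monotone hs.1
      · rw [← hσp]; exact hσm hs.2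
    exact hσm.injective (hinj (hmem s hs) (hmem t ht) e)
  refine ⟨p, fun s => x (σ s), fun s => y (σ s), hp, kx, ky, fun s => ?_, ⟨p / 2, fun e => ?_⟩,
    hinj2, fun s => h.xpos _, fun s => ?_, fun s => ?_⟩
  · simp only [hσP, hxP, hyP, and_self]
  · have := hinj2 ⟨by linarith, by linarith⟩ ⟨le_rfl, hp⟩ e
    linarith
  · rw [kx1, ky1, hu, hw]
    have hE := angE_pos lam (x (σ s)) (y (σ s))
    have e := Real.sin_sq_add_cos_sq (θ (σ s))
    simp only [div_pow]
    rw [← add_div, add_comm, e]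
    positivity
  · rw [kx1, ky1, kx2, ky2]
    constructor <;> ring
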